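/- Every quantum nilpotent algebra R of dimension N over a field K is a noetherian H-unique factorization domain: R is a noetherian domain and every nonzero H-invariant prime ideal of R contains a prime element that is an H-eigenvector. -/

import Mathlib

open scoped BigOperators

noncomputable section

universe u v

/-- The group of `K`-points of a split torus of rank `r`. -/
abbrev Torus (K : Type u) [Field K] (r : ℕ) : Type u := Fin r → Kˣ

section Core

variable (K : Type u) [Field K] {R : Type v} [Ring R] [Algebra K R] {r N : ℕ}

/-- `a` is an eigenvector of the torus action `act` with (integral) character `f`. -/
def IsEigenWith (act : Torus K r →* (R ≃ₐ[K] R)) (f : Fin r → ℤ) (a : R) : Prop :=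
  ∀ ξ : Torus K r, act ξ a = ((∏ i, ξ i ^ f i : Kˣ) : K) • a

/-- The torus action `act` is rational: every element is a finite sum of
eigenvectors whose eigenvalues are given by integral characters of the torus. -/
def IsRationalAction (act : Torus K r →* (R ≃ₐ[K] R)) : Prop :=
  ∀ a : R, ∃ (s : Finset (Fin r → ℤ)) (c : (Fin r → ℤ) → R),
    a = ∑ f ∈ s, c f ∧ ∀ f ∈ s, IsEigenWith K act f (c f)

/-- The ordered monomial `x 0 ^ m 0 * x 1 ^ m 1 * ⋯ * x (N-1) ^ m (N-1)`. -/
def ordMonomial (x : Fin N → R) (m : Fin N → ℕ) : R :=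
  ((List.finRange N).map fun k => x k ^ m k).prod

/-- The ordered monomial in the reversed order of the generators. -/
def revOrdMonomial (x : Fin N → R) (m : Fin N → ℕ) : R :=
  ((List.finRange N).reverse.map fun k => x k ^ m k).prod

/-- The subalgebra generated by the first `m` of the elements `x 0, …, x (N-1)`. -/
def Rsub (x : Fin N → R) (m : ℕ) : Subalgebra K R :=
  Algebra.adjoin K (x '' {l : Fin N | (l : ℕ) < m})

/-- The subalgebra generated by the elements `x l` with `m < l` (for the reversed order). -/
def RsubRev (x : Fin N → R) (m : ℕ) : Subalgebra K R :=
  Algebra.adjoin K (x '' {l : Fin N | m < (l : ℕ)})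

/-- The skew derivation `δ_k : a ↦ x_k a − (h_k · a) x_k` attached to the `k`-th generator. -/
def skewDelta (act : Torus K r →* (R ≃ₐ[K] R)) (x : Fin N → R) (h : Fin N → Torus K r)
    (k : Fin N) : R → R :=
  fun a => x k * a - act (h k) a * x k

end Core

/-- A quantum nilpotent algebra (CGL extension) of dimension `N`:  an iterated skew
polynomial extension `R = K[x_1][x_2; σ_2, δ_2]⋯[x_N; σ_N, δ_N]` equipped with a rational
action of a torus `H = (Kˣ)^r` by `K`-algebra automorphisms such that the `x_k` are
`H`-eigenvectors, each `δ_k` is a locally nilpotent `σ_k`-derivation of the subalgebra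
generated by `x_1, …, x_{k-1}`, and each `σ_k` is given by the action of a torus element
`h_k` whose eigenvalue `λ_k` on `x_k` is not a root of unity.  The iterated skew polynomial
presentation is encoded by the generation, linear independence of ordered monomials
(PBW basis) and the skew commutation conditions. -/
structure QNA (K : Type u) [Field K] (R : Type v) [Ring R] [Algebra K R] (N r : ℕ) where
  x : Fin N → R
  act : Torus K r →* (R ≃ₐ[K] R)
  h : Fin N → Torus K r
  lam : Fin N → K
  rational : IsRationalAction K act
  gen : Algebra.adjoin K (Set.range x) = ⊤
  pbw : LinearIndependent K (ordMonomial (R := R) x)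
  eigenvec : ∀ k : Fin N, ∃ f : Fin r → ℤ, IsEigenWith K act f (x k)
  stable : ∀ k : Fin N, ∀ a ∈ Rsub K x (k : ℕ), skewDelta K act x h k a ∈ Rsub K x (k : ℕ)
  locnil : ∀ k : Fin N, ∀ a ∈ Rsub K x (k : ℕ), ∃ n : ℕ, (skewDelta K act x h k)^[n] a = 0
  hx : ∀ k, act (h k) (x k) = lam k • x k
  lam_not_root : ∀ k, ∀ n : ℕ, n ≠ 0 → lam k ^ n ≠ 1

/-- A symmetric quantum nilpotent algebra: a quantum nilpotent algebra which admits an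
iterated skew polynomial presentation, satisfying the same axioms, also for the reversed
order `x_N, x_{N-1}, …, x_1` of the generators, with respect to torus elements `h*_k`. -/
structure SymQNA (K : Type u) [Field K] (R : Type v) [Ring R] [Algebra K R] (N r : ℕ)
    extends QNA K R N r where
  hstar : Fin N → Torus K r
  lamstar : Fin N → K
  pbwRev : LinearIndependent K (revOrdMonomial (R := R) x)
  stableRev : ∀ k : Fin N, ∀ a ∈ RsubRev K x (k : ℕ),
    skewDelta K act x hstar k a ∈ RsubRev K x (k : ℕ)
  locnilRev : ∀ k : Fin N, ∀ a ∈ RsubRev K x (k : ℕ),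
    ∃ n : ℕ, (skewDelta K act x hstar k)^[n] a = 0
  hxstar : ∀ k, act (hstar k) (x k) = lamstar k • x k
  lamstar_not_root : ∀ k, ∀ n : ℕ, n ≠ 0 → lamstar k ^ n ≠ 1

section Prime

variable (K : Type u) [Field K] {R : Type v} [Ring R] [Algebra K R] {r N : ℕ}

/-- The skew derivation `δ_k` of the `k`-th step of the presentation vanishes. -/
def deltaZero (Q : QNA K R N r) (k : Fin N) : Prop :=
  ∀ a ∈ Rsub K Q.x (k : ℕ), skewDelta K Q.act Q.x Q.h k a = 0

/-- `p` is a prime element of the subalgebra `A`:  `p` is a nonzero noninvertible normal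
element of `A` (`pA = Ap`) such that `A/Ap` is a domain. -/
def IsPrimeIn (A : Subalgebra K R) (p : R) : Prop :=
  p ∈ A ∧ p ≠ 0 ∧ (¬ ∃ u ∈ A, p * u = 1 ∧ u * p = 1) ∧
  (∀ a ∈ A, ∃ b ∈ A, a * p = p * b) ∧
  (∀ a ∈ A, ∃ b ∈ A, p * a = b * p) ∧
  (∀ a ∈ A, ∀ b ∈ A, (∃ d ∈ A, a * b = p * d) → (∃ d ∈ A, a = p * d) ∨ (∃ d ∈ A, b = p * d))

/-- The predecessor function of the level sets of `η`:  `p(k)` is the largest `l < k`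
with `η l = η k`, and `⊥` (i.e. `−∞`) if there is no such `l`. -/
def predIdx {α : Type*} [DecidableEq α] (η : Fin N → α) (k : Fin N) : WithBot (Fin N) :=
  (Finset.univ.filter fun l => l < k ∧ η l = η k).max

/-- The successor function of the level sets of `η`:  `s(k)` is the smallest `l > k`
with `η l = η k`, and `⊤` (i.e. `+∞`) if there is no such `l`. -/
def succIdx {α : Type*} [DecidableEq α] (η : Fin N → α) (k : Fin N) : WithTop (Fin N) :=
  (Finset.univ.filter fun l => k < l ∧ η l = η k).min

/-- `(η, c, y)` is a sequence of homogeneous prime elements for the quantum nilpotent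
algebra `Q` in the sense of the prime element theorem:  `y` is defined by the recursion
`y_k = y_{p(k)} x_k − c_k` (if `δ_k ≠ 0`; `y_k = x_k` if `δ_k = 0`), the `y_k` are
`H`-eigenvectors, and for every `k` the homogeneous prime elements of the subalgebra
`R_k` generated by `x_1, …, x_k` are precisely the nonzero scalar multiples of the
`y_l` with `l ≤ k` and `s(l) > k`. -/
structure IsPrimeSeq (Q : QNA K R N r) (η : Fin N → ℤ) (c : Fin N → R) (y : Fin N → R) :
    Prop where
  c_mem : ∀ k : Fin N, ¬ deltaZero K Q k → c k ∈ Rsub K Q.x (k : ℕ)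
  rec_delta_zero : ∀ k : Fin N, deltaZero K Q k → y k = Q.x k
  rec_delta_ne : ∀ k : Fin N, ¬ deltaZero K Q k →
    y k = (WithBot.recBotCoe (1 : R) (fun l => y l) (predIdx η k)) * Q.x k - c k
  homog : ∀ k : Fin N, ∃ f : Fin r → ℤ, IsEigenWith K Q.act f (y k)
  prime_iff : ∀ k : Fin N, ∀ u : R,
    (IsPrimeIn K (Rsub K Q.x ((k : ℕ) + 1)) u ∧ ∃ f : Fin r → ℤ, IsEigenWith K Q.act f u) ↔
    (∃ l : Fin N, l ≤ k ∧ (∀ l' : Fin N, l < l' → l' ≤ k → η l' ≠ η l) ∧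
      ∃ t : Kˣ, u = (t : K) • y l)

/-- The vector `ē_k = e_k + e_{p(k)} + e_{p²(k)} + ⋯ ∈ ℤ^N`. -/
def ebar (η : Fin N → ℤ) (k : Fin N) : Fin N → ℤ :=
  fun l => if l ≤ k ∧ η l = η k then 1 else 0

/-- The multiplicatively skewsymmetric matrix of eigenvalues:  `1` on the diagonal,
`λ_{kl}` below it and `λ_{lk}⁻¹` above it. -/
def omegaEntry (lam2 : Fin N → Fin N → Kˣ) (k l : Fin N) : Kˣ :=
  if k = l then 1 else if l < k then lam2 k l else (lam2 l k)⁻¹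

/-- The unique group bicharacter `Ω : ℤ^N × ℤ^N → Kˣ` with `Ω(e_k, e_l)` equal to `1`,
`λ_{kl}`, `λ_{lk}⁻¹` according as `k = l`, `k > l`, `k < l`. -/
def Omega (lam2 : Fin N → Fin N → Kˣ) (f g : Fin N → ℤ) : Kˣ :=
  ∏ k, ∏ l, (omegaEntry K lam2 k l) ^ (f k * g l)

/-- The set of exchangeable indices: those `k` with `s(k) ≠ +∞`. -/
def exSet (η : Fin N → ℤ) : Finset (Fin N) :=
  Finset.univ.filter fun k => ∃ l, k < l ∧ η l = η k

/-- Condition (A): `K` contains square roots of the scalars `λ_{kl}` such that the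
subgroup of `Kˣ` generated by all of them contains no elements of order 2. -/
def CondA (lam2 : Fin N → Fin N → Kˣ) : Prop :=
  ∃ sq : Fin N → Fin N → Kˣ, (∀ k l : Fin N, l < k → sq k l ^ 2 = lam2 k l) ∧
    ∀ g ∈ Subgroup.closure {u : Kˣ | ∃ k l : Fin N, l < k ∧ u = sq k l}, g ^ 2 = 1 → g = 1

/-- Condition (B): there exist positive integers `d_n`, `n ∈ range η`, such that
`(λ*_k)^{d_{η(l)}} = (λ*_l)^{d_{η(k)}}` for all exchangeable `k, l`. -/
def CondB (η : Fin N → ℤ) (lamstar : Fin N → K) : Prop :=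
  ∃ d : ℤ → ℕ, (∀ n ∈ Set.range η, 0 < d n) ∧
    ∀ k ∈ exSet η, ∀ l ∈ exSet η, lamstar k ^ d (η l) = lamstar l ^ d (η k)

/-- The defining conditions for the exchange matrix `B̃ ∈ M_{N×ex}(ℤ)`:  columns indexed
outside `ex` vanish; `Ω(Σ_l b_{lk} ē_l, ē_n)` equals `λ*_n` for `k = n` and `1` otherwise;
and the products `y_1^{b_{1k}} ⋯ y_N^{b_{Nk}}` are fixed under `H`, i.e. the characters
`χ_{y_l}` of the `y_l` satisfy `Σ_l b_{lk} χ_{y_l} = 0`. -/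
def IsExchangeMatrix (lam2 : Fin N → Fin N → Kˣ) (η : Fin N → ℤ) (lamstar : Fin N → K)
    (chiy : Fin N → Fin r → ℤ) (B : Fin N → Fin N → ℤ) : Prop :=
  (∀ k : Fin N, k ∉ exSet η → ∀ l, B l k = 0) ∧
  (∀ k ∈ exSet η, ∀ n : Fin N,
    ((Omega K lam2 (fun j => ∑ l, B l k * ebar η l j) (ebar η n) : Kˣ) : K) =
      (if k = n then lamstar n else 1)) ∧
  (∀ k ∈ exSet η, ∀ i : Fin r, (∑ l, B l k * chiy l i) = 0)

/-- `ι : R →ₐ[K] D` realizes the division ring `D` as the division ring of fractions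
`Fract R`:  `ι` is injective and every element of `D` is a right fraction `ι(a) ι(b)⁻¹`. -/
def IsFractionEmb {D : Type v} [DivisionRing D] [Algebra K D] (ι : R →ₐ[K] D) : Prop :=
  Function.Injective ι ∧ ∀ d : D, ∃ a b : R, b ≠ 0 ∧ d * ι b = ι a

end Prime
section UFD

variable (K : Type u) [Field K] {R : Type v} [Ring R] [Algebra K R] {r N : ℕ}

/-- A two-sided ideal `P` of `R` is prime: `P ≠ R` and `a R b ⊆ P` implies
`a ∈ P` or `b ∈ P`. -/
def TwoSidedIdeal.IsPrimeTS (P : TwoSidedIdeal R) : Prop :=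
  P ≠ ⊤ ∧ ∀ a b : R, (∀ t : R, a * t * b ∈ P) → a ∈ P ∨ b ∈ P

/-- A two-sided ideal is `H`-invariant for the torus action `act`. -/
def TwoSidedIdeal.IsHInvariant (act : Torus K r →* (R ≃ₐ[K] R)) (P : TwoSidedIdeal R) :
    Prop :=
  ∀ ξ : Torus K r, ∀ a ∈ P, act ξ a ∈ P

end UFD

/-!
The algebra `R` is embedded equivariantly in its division ring of fractions, and unique
factorization is propagated along each Ore extension `A ⊆ B = A[x; σ, δ]` of the presentation,
where `σ` is the action of `h` and `λ` is the eigenvalue of `h` on `x`.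

* `A` lies in a quantum torus `T` generated by finitely many quasi-commuting `H`-eigenvectors and
  their inverses, with `T` inside the left fractions of `A`. On `T` the skew derivation `δ` is
  inner: as `λ` is not a root of unity, the commuting semisimple operators `1 - h(t) · t⁻¹`,
  for `t` a generator of `T`, have no common kernel in the weight of `x`, so a cocycle argument
  gives `g ∈ T` with `(x - g) * t = σ t * (x - g)` for all `t ∈ T`.
* Let `u` be a minimal product of homogeneous primes of `A` with `u * g ∈ A`. Then
  `z = u * (x - g)` is a homogeneous prime of `B`.
* For a homogeneous prime `p` of `A` not dividing `u`, comparing degrees in `δ` by means of the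
  `q`-Leibniz rule shows `δ p = 0`, and `p` remains prime in `B`.
* Up to a power of `z`, a nonzero `H`-ideal of `B` contains a nonzero element of `A`, hence a
  product of homogeneous primes of `A`; the factors not dividing `u` are primes of `B`, and if all
  factors divide `u` then the ideal contains a power of `z`.
-/

/-! ### Ore extensions inside a ring -/

theorem exists_forall_eq_of_monotone₂ {α : Type*} [PartialOrder α] [WellFoundedGT α]
    (F : ℕ → ℕ → α) (hF : ∀ ⦃k l m n⦄, k ≤ l → m ≤ n → F k m ≤ F l n) :
    ∃ k, ∀ l, k ≤ l → ∀ n, F k n = F l n := by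
  obtain ⟨d, hd⟩ := WellFoundedGT.monotone_chain_condition ⟨fun n => F n n, fun _ _ h => hF h h⟩
  choose κ hκ using fun n => WellFoundedGT.monotone_chain_condition
    ⟨fun k => F k n, fun _ _ h => hF h le_rfl⟩
  refine ⟨max d ((Finset.range d).sup κ), fun l hl n => le_antisymm (hF hl le_rfl) ?_⟩
  rcases lt_or_ge n d with hn | hn
  · have hκn : κ n ≤ max d ((Finset.range d).sup κ) :=
      (Finset.le_sup (Finset.mem_range.2 hn)).trans (le_max_right _ _)
    exact ((hκ n l (hκn.trans hl)).symm.trans (hκ n _ hκn)).le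
  · calc F l n ≤ F (max l n) (max l n) := hF (le_max_left _ _) (le_max_right _ _)
      _ = F d d := (hd _ (hn.trans (le_max_right _ _))).symm
      _ ≤ F (max d ((Finset.range d).sup κ)) n := hF (le_max_left _ _) hn

section OreExtension

variable {K : Type u} [CommRing K] {M : Type v} [Ring M] [Algebra K M]

/-- The inner skew derivation `a ↦ x a - σ(a) x` of the ambient algebra. On a subalgebra `A` such
that it maps `A` to `A`, it is the derivation `δ` of the Ore extension `A[x; σ, δ]`. -/
def skewDer (x : M) (σ : M ≃ₐ[K] M) : Module.End K M :=
  LinearMap.mulLeft K x - LinearMap.mulRight K x ∘ₗ σ.toLinearMap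

theorem skewDer_apply (x : M) (σ : M ≃ₐ[K] M) (a : M) : skewDer x σ a = x * a - σ a * x := rfl

theorem skewDer_mul (x : M) (σ : M ≃ₐ[K] M) (a b : M) :
    skewDer x σ (a * b) = skewDer x σ a * b + σ a * skewDer x σ b := by
  simp only [skewDer_apply, map_mul]
  noncomm_ring

/-- Polynomials in `x` of degree `< n` with coefficients from `A` written on the left. -/
def polyLT (A : Subalgebra K M) (x : M) (n : ℕ) : Submodule K M where
  carrier := {f | ∃ a : ℕ → M, (∀ i, a i ∈ A) ∧ f = ∑ i ∈ Finset.range n, a i * x ^ i}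
  zero_mem' := ⟨fun _ => 0, fun _ => A.zero_mem, by simp⟩
  add_mem' := by
    rintro f g ⟨a, ha, rfl⟩ ⟨b, hb, rfl⟩
    exact ⟨fun i => a i + b i, fun i => A.add_mem (ha i) (hb i), by
      simp [add_mul, Finset.sum_add_distrib]⟩
  smul_mem' := by
    rintro c f ⟨a, ha, rfl⟩
    exact ⟨fun i => c • a i, fun i => A.smul_mem (ha i) c, by simp [Finset.smul_sum]⟩

/-- `B` is the Ore extension `A[x; σ, δ]`, realised inside an ambient algebra. Only the
automorphism `σ` is recorded: `δ` is the restriction of `skewDer x σ` to `A`. -/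
structure IsOreExtension (A B : Subalgebra K M) (x : M) (σ : M ≃ₐ[K] M) : Prop where
  le : A ≤ B
  gen_mem : x ∈ B
  map_mem : ∀ a ∈ A, σ a ∈ A
  symm_mem : ∀ a ∈ A, σ.symm a ∈ A
  skewDer_mem : ∀ a ∈ A, skewDer x σ a ∈ A
  exists_mem_polyLT : ∀ b ∈ B, ∃ n, b ∈ polyLT A x n
  coeff_eq_zero : ∀ (n : ℕ) (a : ℕ → M), (∀ i, a i ∈ A) →
    ∑ i ∈ Finset.range n, a i * x ^ i = 0 → ∀ i < n, a i = 0

variable {A B : Subalgebra K M} {x : M} {σ : M ≃ₐ[K] M} {n m : ℕ} {a b f g : M}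

theorem eq_zero_of_mem_polyLT_zero (hf : f ∈ polyLT A x 0) : f = 0 := by
  obtain ⟨a, _, rfl⟩ := hf
  exact Finset.sum_range_zero _

theorem mem_polyLT_succ :
    f ∈ polyLT A x (n + 1) ↔ ∃ f' ∈ polyLT A x n, ∃ a ∈ A, f = f' + a * x ^ n := by
  constructor
  · rintro ⟨a, ha, rfl⟩
    exact ⟨_, ⟨a, ha, rfl⟩, a n, ha n, Finset.sum_range_succ _ _⟩
  · rintro ⟨f', ⟨a, ha, rfl⟩, b, hb, rfl⟩
    refine ⟨Function.update a n b, fun i => ?_, ?_⟩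
    · obtain rfl | hi := eq_or_ne i n
      · rwa [Function.update_self]
      · rw [Function.update_of_ne hi]; exact ha i
    · rw [Finset.sum_range_succ, Function.update_self]
      congr 1
      refine Finset.sum_congr rfl fun i hi => ?_
      rw [Function.update_of_ne (Finset.mem_range.1 hi).ne]

theorem polyLT_mono (h : n ≤ m) : polyLT A x n ≤ polyLT A x m := by
  induction h with
  | refl => exact le_rfl
  | step _ ih => exact fun f hf => mem_polyLT_succ.2 ⟨f, ih hf, 0, A.zero_mem, by simp⟩

theorem mul_gen_pow_mem_polyLT (ha : a ∈ A) : a * x ^ n ∈ polyLT A x (n + 1) :=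
  mem_polyLT_succ.2 ⟨0, zero_mem _, a, ha, (zero_add _).symm⟩

theorem mul_mem_polyLT (ha : a ∈ A) (hf : f ∈ polyLT A x n) : a * f ∈ polyLT A x n := by
  obtain ⟨b, hb, rfl⟩ := hf
  exact ⟨fun i => a * b i, fun i => A.mul_mem ha (hb i), by simp [Finset.mul_sum, mul_assoc]⟩

theorem polyLT_mul_gen (hf : f ∈ polyLT A x n) : f * x ∈ polyLT A x (n + 1) := by
  induction n generalizing f with
  | zero => rw [eq_zero_of_mem_polyLT_zero hf, zero_mul]; exact zero_mem _
  | succ n ih =>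
    obtain ⟨f', hf', a, ha, rfl⟩ := mem_polyLT_succ.1 hf
    rw [add_mul, mul_assoc, ← pow_succ]
    exact add_mem (polyLT_mono (by omega) (ih hf')) (mul_gen_pow_mem_polyLT ha)

theorem polyLT_mul_gen_pow (hf : f ∈ polyLT A x n) : f * x ^ m ∈ polyLT A x (n + m) := by
  induction m with
  | zero => simpa using hf
  | succ m ih => rw [pow_succ, ← mul_assoc]; exact polyLT_mul_gen ih

theorem gen_mul_mem_polyLT (hσ : ∀ a ∈ A, σ a ∈ A) (hδ : ∀ a ∈ A, skewDer x σ a ∈ A)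
    (hf : f ∈ polyLT A x n) : x * f ∈ polyLT A x (n + 1) := by
  induction n generalizing f with
  | zero => rw [eq_zero_of_mem_polyLT_zero hf, mul_zero]; exact zero_mem _
  | succ n ih =>
    obtain ⟨f', hf', a, ha, rfl⟩ := mem_polyLT_succ.1 hf
    have expand : x * (f' + a * x ^ n) =
        x * f' + (skewDer x σ a * x ^ n + σ a * x ^ (n + 1)) := by
      rw [skewDer_apply, pow_succ']; noncomm_ring
    rw [expand]
    exact add_mem (polyLT_mono (by omega) (ih hf'))
      (add_mem (polyLT_mono (by omega) (mul_gen_pow_mem_polyLT (hδ a ha)))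
        (mul_gen_pow_mem_polyLT (hσ a ha)))

theorem exists_mul_mem_polyLT_of_mem_adjoin (hσ : ∀ a ∈ A, σ a ∈ A)
    (hδ : ∀ a ∈ A, skewDer x σ a ∈ A) (hb : b ∈ Algebra.adjoin K (insert x (A : Set M)))
    (hf : f ∈ polyLT A x n) : ∃ m, b * f ∈ polyLT A x m := by
  induction hb using Algebra.adjoin_induction generalizing n f with
  | mem y hy =>
    rcases hy with rfl | hy
    · exact ⟨n + 1, gen_mul_mem_polyLT hσ hδ hf⟩
    · exact ⟨n, mul_mem_polyLT hy hf⟩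
  | algebraMap c => exact ⟨n, mul_mem_polyLT (A.algebraMap_mem c) hf⟩
  | add b c _ _ ihb ihc =>
    obtain ⟨k, hk⟩ := ihb hf
    obtain ⟨l, hl⟩ := ihc hf
    rw [add_mul]
    exact ⟨max k l, add_mem (polyLT_mono (le_max_left _ _) hk) (polyLT_mono (le_max_right _ _) hl)⟩
  | mul b c _ _ ihb ihc =>
    obtain ⟨k, hk⟩ := ihc hf
    rw [mul_assoc]
    exact ihb hk

theorem exists_mem_polyLT_of_mem_adjoin (hσ : ∀ a ∈ A, σ a ∈ A)
    (hδ : ∀ a ∈ A, skewDer x σ a ∈ A) (hb : b ∈ Algebra.adjoin K (insert x (A : Set M))) :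
    ∃ n, b ∈ polyLT A x n := by
  have h1 : (1 : M) ∈ polyLT A x 1 := by
    simpa using mul_gen_pow_mem_polyLT (x := x) (n := 0) A.one_mem
  simpa using exists_mul_mem_polyLT_of_mem_adjoin hσ hδ hb h1

namespace IsOreExtension

theorem polyLT_le (H : IsOreExtension A B x σ) (n : ℕ) : polyLT A x n ≤ B.toSubmodule := by
  rintro _ ⟨a, ha, rfl⟩
  exact B.sum_mem fun i _ => B.mul_mem (H.le (ha i)) (B.pow_mem H.gen_mem i)

theorem pow_map_mem (H : IsOreExtension A B x σ) (n : ℕ) (ha : a ∈ A) : (σ ^ n) a ∈ A := by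
  induction n with
  | zero => simpa using ha
  | succ n ih => rw [pow_succ', AlgEquiv.mul_apply]; exact H.map_mem _ ih

theorem pow_symm_mem (H : IsOreExtension A B x σ) (n : ℕ) (ha : a ∈ A) : (σ ^ n).symm a ∈ A := by
  induction n generalizing a with
  | zero => exact ha
  | succ n ih =>
    have : (σ ^ (n + 1)).symm a = (σ ^ n).symm (σ.symm a) := by
      rw [AlgEquiv.symm_apply_eq, pow_succ', AlgEquiv.mul_apply, AlgEquiv.apply_symm_apply,
        AlgEquiv.apply_symm_apply]
    rw [this]
    exact ih (H.symm_mem _ ha)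

theorem gen_pow_mul_mem_polyLT (H : IsOreExtension A B x σ) (hf : f ∈ polyLT A x n) :
    x ^ m * f ∈ polyLT A x (n + m) := by
  induction m with
  | zero => simpa using hf
  | succ m ih => rw [pow_succ', mul_assoc]; exact gen_mul_mem_polyLT H.map_mem H.skewDer_mem ih

theorem gen_pow_mul_sub_mem_polyLT (H : IsOreExtension A B x σ) (ha : a ∈ A) (n : ℕ) :
    x ^ n * a - (σ ^ n) a * x ^ n ∈ polyLT A x n := by
  induction n with
  | zero => simp
  | succ n ih =>
    have expand : x ^ (n + 1) * a - (σ ^ (n + 1)) a * x ^ (n + 1) =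
        x * (x ^ n * a - (σ ^ n) a * x ^ n) + skewDer x σ ((σ ^ n) a) * x ^ n := by
      rw [skewDer_apply, pow_succ' σ, AlgEquiv.mul_apply, pow_succ']; noncomm_ring
    rw [expand]
    exact add_mem (gen_mul_mem_polyLT H.map_mem H.skewDer_mem ih)
      (mul_gen_pow_mem_polyLT (H.skewDer_mem _ (H.pow_map_mem n ha)))

theorem polyLT_mul_polyLT_succ (H : IsOreExtension A B x σ) (hf : f ∈ polyLT A x n)
    (hg : g ∈ polyLT A x (m + 1)) : f * g ∈ polyLT A x (n + m) := by
  induction n generalizing f with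
  | zero => rw [eq_zero_of_mem_polyLT_zero hf, zero_mul]; exact zero_mem _
  | succ n ih =>
    obtain ⟨f', hf', b, hb, rfl⟩ := mem_polyLT_succ.1 hf
    rw [add_mul, mul_assoc]
    exact add_mem (polyLT_mono (by omega) (ih hf'))
      (polyLT_mono (by omega) (mul_mem_polyLT hb (H.gen_pow_mul_mem_polyLT (m := n) hg)))

theorem leading_term_mul (H : IsOreExtension A B x σ) (ha : a ∈ A) (hb : b ∈ A)
    (hf : f ∈ polyLT A x n) (hg : g ∈ polyLT A x m) :
    (f + a * x ^ n) * (g + b * x ^ m) - (a * (σ ^ n) b) * x ^ (n + m) ∈ polyLT A x (n + m) := by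
  have expand : (f + a * x ^ n) * (g + b * x ^ m) - (a * (σ ^ n) b) * x ^ (n + m) =
      f * (g + b * x ^ m) + a * (x ^ n * g) + (a * (x ^ n * b - (σ ^ n) b * x ^ n)) * x ^ m := by
    rw [pow_add]; noncomm_ring
  rw [expand]
  refine add_mem (add_mem ?_ ?_) ?_
  · exact H.polyLT_mul_polyLT_succ hf (mem_polyLT_succ.2 ⟨g, hg, b, hb, rfl⟩)
  · exact mul_mem_polyLT ha (polyLT_mono (by omega) (H.gen_pow_mul_mem_polyLT (m := n) hg))
  · exact polyLT_mul_gen_pow (mul_mem_polyLT ha (H.gen_pow_mul_sub_mem_polyLT hb n))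

theorem exists_leading_term (H : IsOreExtension A B x σ) (hb : b ∈ B) (hb0 : b ≠ 0) :
    ∃ n, ∃ f ∈ polyLT A x n, ∃ a ∈ A, a ≠ 0 ∧ b = f + a * x ^ n := by
  obtain ⟨n, hn⟩ := H.exists_mem_polyLT b hb
  induction n with
  | zero => exact absurd (eq_zero_of_mem_polyLT_zero hn) hb0
  | succ n ih =>
    obtain ⟨f, hf, a, ha, rfl⟩ := mem_polyLT_succ.1 hn
    by_cases ha0 : a = 0
    · exact ih (by simpa only [ha0, zero_mul, add_zero] using hf)
    · exact ⟨n, f, hf, a, ha, ha0, rfl⟩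

theorem eq_zero_of_mul_gen_pow_mem_polyLT (H : IsOreExtension A B x σ) (ha : a ∈ A)
    (h : a * x ^ n ∈ polyLT A x n) : a = 0 := by
  obtain ⟨b, hb, hab⟩ := h
  refine neg_eq_zero.1 ?_
  rw [← Function.update_self n (-a) b]
  refine H.coeff_eq_zero (n + 1) _ (fun i => ?_) ?_ n n.lt_succ_self
  · obtain rfl | hi := eq_or_ne i n
    · rw [Function.update_self]; exact A.neg_mem ha
    · rw [Function.update_of_ne hi]; exact hb i
  · rw [Finset.sum_range_succ, Function.update_self, Finset.sum_congr rfl fun i hi => by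
      rw [Function.update_of_ne (Finset.mem_range.1 hi).ne], ← hab, neg_mul, add_neg_cancel]

theorem eq_zero_of_add_mem_polyLT (H : IsOreExtension A B x σ) (hf : f ∈ polyLT A x n)
    (ha : a ∈ A) (h : f + a * x ^ n ∈ polyLT A x n) : a = 0 :=
  H.eq_zero_of_mul_gen_pow_mem_polyLT ha ((Submodule.add_mem_iff_right _ hf).1 h)

theorem noZeroDivisors [NoZeroDivisors A] (H : IsOreExtension A B x σ) : NoZeroDivisors B where
  eq_zero_or_eq_zero_of_mul_eq_zero := by
    rintro ⟨p, hp⟩ ⟨q, hq⟩ hpq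
    by_contra! hne
    obtain ⟨n, f, hf, a, ha, ha0, rfl⟩ := H.exists_leading_term hp fun h => hne.1 (Subtype.ext h)
    obtain ⟨m, g, hg, b, hb, hb0, rfl⟩ := H.exists_leading_term hq fun h => hne.2 (Subtype.ext h)
    have hlead := H.leading_term_mul ha hb hf hg
    rw [show (f + a * x ^ n) * (g + b * x ^ m) = 0 from congrArg Subtype.val hpq, zero_sub,
      neg_mem_iff] at hlead
    have hb' := H.pow_map_mem n hb
    have hab : (⟨a, ha⟩ : A) * ⟨(σ ^ n) b, hb'⟩ = 0 :=
      Subtype.ext (H.eq_zero_of_mul_gen_pow_mem_polyLT (A.mul_mem ha hb') hlead)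
    rcases mul_eq_zero.1 hab with h | h
    · exact ha0 (congrArg Subtype.val h)
    · exact hb0 ((map_eq_zero_iff _ (σ ^ n).injective).1 (congrArg Subtype.val h))

/-- The left ideal of `A` consisting of the leading coefficients in degree `n` of elements of `I`,
untwisted by `σ ^ n` so that the result is stable under left multiplication by `A` and increases
with `n`. -/
def leadingCoeffIdeal (H : IsOreExtension A B x σ) (I : Ideal B) (n : ℕ) : Ideal A where
  carrier := {a | ∃ f ∈ polyLT A x n, ∃ b ∈ I, (b : M) = f + (σ ^ n) (a : M) * x ^ n}
  zero_mem' := ⟨0, zero_mem _, 0, I.zero_mem, by simp⟩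
  add_mem' := by
    rintro a a' ⟨f, hf, b, hb, h⟩ ⟨f', hf', b', hb', h'⟩
    refine ⟨f + f', add_mem hf hf', b + b', I.add_mem hb hb', ?_⟩
    push_cast
    rw [h, h', map_add, add_mul]; abel
  smul_mem' := by
    rintro c a ⟨f, hf, b, hb, h⟩
    have hc := H.pow_map_mem n c.2
    refine ⟨(σ ^ n) c * f, mul_mem_polyLT hc hf, ⟨(σ ^ n) c, H.le hc⟩ * b, I.mul_mem_left _ hb, ?_⟩
    push_cast
    rw [h, smul_eq_mul, mul_add, Subalgebra.coe_mul, map_mul, mul_assoc]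

theorem leadingCoeffIdeal_le_succ (H : IsOreExtension A B x σ) (I : Ideal B) (n : ℕ) :
    H.leadingCoeffIdeal I n ≤ H.leadingCoeffIdeal I (n + 1) := by
  rintro a ⟨f, hf, b, hb, h⟩
  have ha := H.pow_map_mem n a.2
  refine ⟨x * f + skewDer x σ ((σ ^ n) a) * x ^ n, ?_, ⟨x, H.gen_mem⟩ * b,
    I.mul_mem_left _ hb, ?_⟩
  · exact add_mem (gen_mul_mem_polyLT H.map_mem H.skewDer_mem hf)
      (mul_gen_pow_mem_polyLT (H.skewDer_mem _ ha))
  · push_cast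
    rw [h, skewDer_apply, pow_succ' σ, AlgEquiv.mul_apply, pow_succ']; noncomm_ring

theorem leadingCoeffIdeal_mono (H : IsOreExtension A B x σ) {I J : Ideal B} (hIJ : I ≤ J)
    (hnm : n ≤ m) : H.leadingCoeffIdeal I n ≤ H.leadingCoeffIdeal J m := by
  refine (monotone_nat_of_le_succ (H.leadingCoeffIdeal_le_succ I) hnm).trans ?_
  rintro a ⟨f, hf, b, hb, h⟩
  exact ⟨f, hf, b, hIJ hb, h⟩

theorem le_of_leadingCoeffIdeal_le (H : IsOreExtension A B x σ) {I J : Ideal B} (hIJ : I ≤ J)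
    (h : ∀ n, H.leadingCoeffIdeal J n ≤ H.leadingCoeffIdeal I n) : J ≤ I := by
  suffices key : ∀ n, ∀ b ∈ J, (b : M) ∈ polyLT A x n → b ∈ I by
    intro b hb
    obtain ⟨n, hn⟩ := H.exists_mem_polyLT b b.2
    exact key n b hb hn
  intro n
  induction n with
  | zero =>
    intro b _ hb
    rw [show b = 0 from Subtype.ext (eq_zero_of_mem_polyLT_zero hb)]
    exact I.zero_mem
  | succ n ih =>
    intro b hbJ hb
    obtain ⟨f, hf, a, ha, hfa⟩ := mem_polyLT_succ.1 hb
    have lead_mem : (⟨(σ ^ n).symm a, H.pow_symm_mem n ha⟩ : A) ∈ H.leadingCoeffIdeal J n :=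
      ⟨f, hf, b, hbJ, by simpa only [AlgEquiv.apply_symm_apply] using hfa⟩
    obtain ⟨f', hf', b', hb', hfa'⟩ := h n lead_mem
    have hsub : b - b' ∈ I := by
      refine ih _ (J.sub_mem hbJ (hIJ hb')) ?_
      push_cast
      rw [hfa, hfa', AlgEquiv.apply_symm_apply, add_sub_add_right_eq_sub]
      exact sub_mem hf hf'
    simpa only [sub_add_cancel] using I.add_mem hsub hb'

theorem isNoetherianRing [IsNoetherianRing A] (H : IsOreExtension A B x σ) :
    IsNoetherianRing B := by
  rw [isNoetherianRing_iff, ← monotone_stabilizes_iff_noetherian]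
  intro I
  obtain ⟨k, hk⟩ := exists_forall_eq_of_monotone₂ (fun k n => H.leadingCoeffIdeal (I k) n)
    fun _ _ _ _ hkl hmn => H.leadingCoeffIdeal_mono (I.monotone hkl) hmn
  exact ⟨k, fun l hkl => le_antisymm (I.monotone hkl)
    (H.le_of_leadingCoeffIdeal_le (I.monotone hkl) fun n => (hk l hkl n).ge)⟩

end IsOreExtension

end OreExtension

/-! ### The Ore tower of a quantum nilpotent algebra -/

section Monomials

variable {K : Type u} [Field K] {R : Type v} [Ring R] {N : ℕ}

theorem prod_map_pow_mul_pow_eq_update (x : Fin N → R) (m : Fin N → ℕ) (k : Fin N) (i : ℕ)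
    (hm : ∀ l, k ≤ l → m l = 0) {L : List (Fin N)} (hL : L.Pairwise (· < ·)) (hk : k ∈ L) :
    (L.map fun l => x l ^ m l).prod * x k ^ i =
      (L.map fun l => x l ^ Function.update m k i l).prod := by
  induction L with
  | nil => simp at hk
  | cons a L ih =>
    rw [List.pairwise_cons] at hL
    rw [List.map_cons, List.map_cons, List.prod_cons, List.prod_cons]
    rcases List.mem_cons.1 hk with rfl | hkL
    · have tail_eq_one : ∀ m' : Fin N → ℕ, (∀ l ∈ L, m' l = 0) →
          (L.map fun l => x l ^ m' l).prod = 1 := fun m' hm' =>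
        List.prod_eq_one (by simpa using fun l hl => by rw [hm' l hl, pow_zero])
      have hm_tail : ∀ l ∈ L, m l = 0 := fun l hl => hm l (hL.1 l hl).le
      have hupdate_tail : ∀ l ∈ L, Function.update m k i l = 0 := fun l hl => by
        rw [Function.update_of_ne (hL.1 l hl).ne', hm_tail l hl]
      rw [tail_eq_one m hm_tail, tail_eq_one _ hupdate_tail, hm k le_rfl, Function.update_self,
        pow_zero, one_mul, one_mul, mul_one]
    · rw [mul_assoc, ih hL.2 hkL, Function.update_of_ne (hL.1 k hkL).ne]

theorem ordMonomial_mul_pow_eq_update (x : Fin N → R) (m : Fin N → ℕ) (k : Fin N) (i : ℕ)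
    (hm : ∀ l, k ≤ l → m l = 0) :
    ordMonomial x m * x k ^ i = ordMonomial x (Function.update m k i) :=
  prod_map_pow_mul_pow_eq_update x m k i hm (List.pairwise_lt_finRange N) (List.mem_finRange k)

/-- Exponent vectors of the ordered monomials in the first `k` generators. -/
def lowExponents (N k : ℕ) : Set (Fin N → ℕ) := {m | ∀ l : Fin N, k ≤ (l : ℕ) → m l = 0}

theorem update_mem_lowExponents {k : Fin N} {m : Fin N → ℕ} (hm : m ∈ lowExponents N k) (i : ℕ) :
    Function.update m k i ∈ lowExponents N (k + 1) := fun l hl => by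
  rw [Function.update_of_ne (fun h => by simp [h] at hl), hm l (by omega)]

theorem injective_update_lowExponents (k : Fin N) :
    Function.Injective fun p : lowExponents N k × ℕ => Function.update p.1.1 k p.2 := by
  rintro ⟨⟨m, hm⟩, i⟩ ⟨⟨m', hm'⟩, i'⟩ h
  have hi : i = i' := by simpa using congrFun h k
  have hmm' : m = m' := by
    ext l
    obtain rfl | hl := eq_or_ne l k
    · rw [hm l le_rfl, hm' l le_rfl]
    · simpa [Function.update_of_ne hl] using congrFun h l
  simp [hi, hmm']

variable [Algebra K R]

theorem eq_zero_of_sum_mul_pow_eq_zero {ι : Type*} {v : ι → R} {x : R}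
    (hv : LinearIndependent K fun p : ι × ℕ => v p.1 * x ^ p.2) {n : ℕ} {a : ℕ → R}
    (ha : ∀ i, a i ∈ Submodule.span K (Set.range v))
    (h0 : ∑ i ∈ Finset.range n, a i * x ^ i = 0) : ∀ i < n, a i = 0 := by
  classical
  choose c hc using fun i => Finsupp.mem_span_range_iff_exists_finsupp.1 (ha i)
  set S : Finset ι := (Finset.range n).biUnion fun i => (c i).support
  have sum_eq : ∀ i ∈ Finset.range n, ∑ j ∈ S, c i j • (v j * x ^ i) = a i * x ^ i := by
    intro i hi
    have hS : (c i).support ⊆ S := Finset.subset_biUnion_of_mem (fun i => (c i).support) hi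
    rw [← hc i, Finsupp.sum_of_support_subset _ hS _ (by simp), Finset.sum_mul]
    simp only [smul_mul_assoc]
  have coeff_zero := linearIndependent_iff'.1 hv (S ×ˢ Finset.range n) (fun p => c p.2 p.1)
    (by rw [Finset.sum_product_right, Finset.sum_congr rfl sum_eq, h0])
  intro i hi
  rw [← hc i]
  refine Finset.sum_eq_zero fun j hj => ?_
  have hjS : j ∈ S := Finset.mem_biUnion.2 ⟨i, Finset.mem_range.2 hi, hj⟩
  have hcij : c i j = 0 := coeff_zero (j, i) (Finset.mk_mem_product hjS (Finset.mem_range.2 hi))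
  simp only [hcij, zero_smul]

end Monomials

namespace QNA

variable {K : Type u} [Field K] {R : Type v} [Ring R] [Algebra K R] {N r : ℕ} (Q : QNA K R N r)

theorem act_mem_Rsub (n : ℕ) (ξ : Torus K r) {a : R} (ha : a ∈ Rsub K Q.x n) :
    Q.act ξ a ∈ Rsub K Q.x n := by
  suffices h : Rsub K Q.x n ≤ (Rsub K Q.x n).comap (Q.act ξ : R →ₐ[K] R) from h ha
  refine Algebra.adjoin_le ?_
  rintro _ ⟨l, hl, rfl⟩
  obtain ⟨f, hf⟩ := Q.eigenvec l
  change Q.act ξ (Q.x l) ∈ Rsub K Q.x n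
  rw [hf ξ]
  exact Subalgebra.smul_mem _ (Algebra.subset_adjoin (Set.mem_image_of_mem _ hl)) _

theorem Rsub_zero : Rsub K Q.x 0 = ⊥ := by simp [Rsub]

theorem Rsub_top : Rsub K Q.x N = ⊤ := by simp [Rsub, ← Q.gen]

theorem exists_mem_polyLT (k : Fin N) {b : R} (hb : b ∈ Rsub K Q.x (k + 1)) :
    ∃ n, b ∈ polyLT (Rsub K Q.x k) (Q.x k) n := by
  refine exists_mem_polyLT_of_mem_adjoin (σ := Q.act (Q.h k))
    (fun a => Q.act_mem_Rsub k (Q.h k)) (Q.stable k) (Algebra.adjoin_mono ?_ hb)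
  rintro _ ⟨l, hl, rfl⟩
  rcases Nat.lt_succ_iff_lt_or_eq.1 hl with h | h
  · exact Or.inr (Algebra.subset_adjoin ⟨l, h, rfl⟩)
  · exact Or.inl (congrArg Q.x (Fin.ext h))

theorem Rsub_le_span {n : ℕ} (hn : n ≤ N) :
    (Rsub K Q.x n).toSubmodule ≤ Submodule.span K (ordMonomial Q.x '' lowExponents N n) := by
  induction n with
  | zero =>
    intro a ha
    rw [Subalgebra.mem_toSubmodule, Q.Rsub_zero, Algebra.mem_bot] at ha
    obtain ⟨c, rfl⟩ := ha
    rw [Algebra.algebraMap_eq_smul_one]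
    exact Submodule.smul_mem _ _
      (Submodule.subset_span ⟨0, fun _ _ => rfl, by simp [ordMonomial]⟩)
  | succ n ih =>
    intro b hb
    obtain ⟨d, a, ha, rfl⟩ := Q.exists_mem_polyLT ⟨n, hn⟩ hb
    refine Submodule.sum_mem _ fun i _ => ?_
    suffices h : Submodule.span K (ordMonomial Q.x '' lowExponents N n) ≤
        (Submodule.span K (ordMonomial Q.x '' lowExponents N (n + 1))).comap
          (LinearMap.mulRight K (Q.x ⟨n, hn⟩ ^ i)) from h (ih (by omega) (ha i))
    rw [Submodule.span_le]
    rintro _ ⟨m, hm, rfl⟩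
    exact Submodule.subset_span ⟨_, update_mem_lowExponents (k := ⟨n, hn⟩) hm i,
      (ordMonomial_mul_pow_eq_update Q.x m ⟨n, hn⟩ i fun l hl => hm l hl).symm⟩

theorem linearIndependent_ordMonomial_mul_pow (k : Fin N) :
    LinearIndependent K fun p : lowExponents N k × ℕ => ordMonomial Q.x p.1 * Q.x k ^ p.2 := by
  convert Q.pbw.comp _ (injective_update_lowExponents k) using 2 with p
  exact ordMonomial_mul_pow_eq_update Q.x p.1 k p.2 fun l hl => p.1.2 l hl

theorem isOreExtension (k : Fin N) :
    IsOreExtension (Rsub K Q.x k) (Rsub K Q.x (k + 1)) (Q.x k) (Q.act (Q.h k)) where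
  le := Algebra.adjoin_mono (Set.image_mono fun _ => Nat.lt_succ_of_lt)
  gen_mem := Algebra.subset_adjoin ⟨k, Nat.lt_succ_self _, rfl⟩
  map_mem a ha := Q.act_mem_Rsub _ _ ha
  symm_mem a ha := by
    have hinv : (Q.act (Q.h k)).symm = Q.act (Q.h k)⁻¹ := by rw [map_inv]; rfl
    rw [hinv]
    exact Q.act_mem_Rsub _ _ ha
  skewDer_mem a ha := Q.stable k a ha
  exists_mem_polyLT b hb := Q.exists_mem_polyLT k hb
  coeff_eq_zero n a ha := by
    refine eq_zero_of_sum_mul_pow_eq_zero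
      (v := fun m : lowExponents N k => ordMonomial Q.x m)
      (Q.linearIndependent_ordMonomial_mul_pow k) fun i => ?_
    rw [← Set.image_eq_range]
    exact Q.Rsub_le_span k.2.le (ha i)

theorem nontrivial (Q : QNA K R N r) : Nontrivial R := ⟨ordMonomial Q.x 0, 0, Q.pbw.ne_zero 0⟩

theorem isNoetherianRing_Rsub {n : ℕ} (hn : n ≤ N) : IsNoetherianRing (Rsub K Q.x n) := by
  induction n with
  | zero =>
    rw [Q.Rsub_zero]
    refine isNoetherianRing_of_surjective K _ (algebraMap K (⊥ : Subalgebra K R)) fun y => ?_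
    obtain ⟨c, hc⟩ := Algebra.mem_bot.1 y.2
    exact ⟨c, Subtype.ext hc⟩
  | succ n ih =>
    have := ih (by omega)
    exact (Q.isOreExtension ⟨n, hn⟩).isNoetherianRing

theorem noZeroDivisors_Rsub {n : ℕ} (hn : n ≤ N) : NoZeroDivisors (Rsub K Q.x n) := by
  induction n with
  | zero =>
    have := Q.nontrivial
    rw [Q.Rsub_zero]
    exact (Algebra.botEquivOfInjective (algebraMap K R).injective).toMulEquiv.noZeroDivisors
  | succ n ih =>
    have := ih (by omega)
    exact (Q.isOreExtension ⟨n, hn⟩).noZeroDivisors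

theorem isNoetherianRing (Q : QNA K R N r) : IsNoetherianRing R := by
  have := Q.isNoetherianRing_Rsub le_rfl
  rw [Q.Rsub_top] at this
  exact isNoetherianRing_of_ringEquiv _ (Subalgebra.topEquiv (R := K) (A := R)).toRingEquiv

theorem isDomain (Q : QNA K R N r) : IsDomain R := by
  have := Q.nontrivial
  have hR := Q.noZeroDivisors_Rsub le_rfl
  rw [Q.Rsub_top] at hR
  have := (Subalgebra.topEquiv (R := K) (A := R)).symm.toMulEquiv.noZeroDivisors
  exact NoZeroDivisors.to_isDomain R

end QNA

/-! ### Division rings of fractions with a group action -/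

section Fractions

theorem nonempty_oreSet_nonZeroDivisors {A : Type*} [Ring A] [IsDomain A] [IsNoetherianRing A] :
    Nonempty (OreLocalization.OreSet (nonZeroDivisors A)) :=
  nonempty_oreSet_of_strongRankCondition

theorem exists_mul_eq_mul_of_ne_zero {A : Type*} [Ring A] [IsDomain A] [IsNoetherianRing A]
    (b : A) {a : A} (ha : a ≠ 0) : ∃ c d : A, c ≠ 0 ∧ c * b = d * a := by
  obtain ⟨d, c, h⟩ := OreLocalization.nonempty_oreSet_iff_of_noZeroDivisors.1
    nonempty_oreSet_nonZeroDivisors b ⟨a, mem_nonZeroDivisors_of_ne_zero ha⟩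
  exact ⟨c, d, nonZeroDivisors.coe_ne_zero c, h⟩

variable {K : Type*} [CommRing K] {R : Type v} [Ring R] [Algebra K R]

theorem exists_divisionRing_fractions (K) [CommRing K] (R : Type v) [Ring R] [Algebra K R]
    [IsNoetherianRing R] [IsDomain R] :
    ∃ (D : Type v) (_ : DivisionRing D) (_ : Algebra K D) (ι : R →ₐ[K] D),
      Function.Injective ι ∧ (∀ d, ∃ s t, s ≠ 0 ∧ ι s * d = ι t) ∧
      ∀ φ : R →ₐ[K] R, Function.Injective φ → ∃ ψ : D →ₐ[K] D, ∀ a, ψ (ι a) = ι (φ a) := by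
  obtain ⟨_⟩ := nonempty_oreSet_nonZeroDivisors (A := R)
  let D := OreLocalization (nonZeroDivisors R) R
  let ι : R →ₐ[K] D := { (OreLocalization.numeratorRingHom : R →+* D) with commutes' _ := rfl }
  have hι : Function.Injective ι := OreLocalization.numeratorHom_inj inf_le_left
  refine ⟨D, inferInstance, inferInstance, ι, hι, fun d => ?_, fun φ hφ => ?_⟩
  · induction d using OreLocalization.ind with
    | _ t s => exact ⟨s, t, nonZeroDivisors.coe_ne_zero s, OreLocalization.mul_cancel⟩
  · have hne : ∀ s : nonZeroDivisors R, ι (φ s) ≠ 0 := fun s => by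
      rw [Ne, map_eq_zero_iff _ hι, map_eq_zero_iff _ hφ]
      exact nonZeroDivisors.coe_ne_zero s
    let units : nonZeroDivisors R →* Dˣ :=
      { toFun s := Units.mk0 (ι (φ s)) (hne s)
        map_one' := by ext; simp
        map_mul' s t := by ext; simp }
    let ψ : D →+* D := OreLocalization.universalHom ((ι.comp φ : R →ₐ[K] D) : R →+* D) units
      fun _ => rfl
    have hψ : ∀ a, ψ (ι a) = ι (φ a) := fun a => OreLocalization.universalHom_commutes _ _ _
    refine ⟨{ ψ with commutes' := fun c => ?_ }, hψ⟩
    change ψ (algebraMap K D c) = _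
    rw [← ι.commutes, hψ, φ.commutes]

theorem algHom_ext_of_fractions {D : Type*} [DivisionRing D] [Algebra K D] {ι : R →ₐ[K] D}
    (hι : Function.Injective ι) (hfrac : ∀ d, ∃ s t, s ≠ 0 ∧ ι s * d = ι t) {f g : D →ₐ[K] D}
    (h : f.comp ι = g.comp ι) : f = g := by
  have h' : ∀ a, f (ι a) = g (ι a) := DFunLike.congr_fun h
  ext d
  obtain ⟨s, t, hs, hst⟩ := hfrac d
  have hgs : g (ι s) ≠ 0 := by
    rwa [Ne, map_eq_zero_iff g (RingHom.injective (g : D →+* D)), map_eq_zero_iff ι hι]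
  refine mul_left_cancel₀ hgs ?_
  calc g (ι s) * f d = f (ι s * d) := by rw [map_mul, h']
    _ = g (ι s * d) := by rw [hst, h']
    _ = g (ι s) * g d := map_mul _ _ _

theorem exists_divisionRing_action {G : Type*} [Group G] [IsNoetherianRing R] [IsDomain R]
    (act : G →* (R ≃ₐ[K] R)) :
    ∃ (D : Type v) (_ : DivisionRing D) (_ : Algebra K D) (ι : R →ₐ[K] D)
      (actD : G →* (D ≃ₐ[K] D)),
      Function.Injective ι ∧ ∀ ξ a, actD ξ (ι a) = ι (act ξ a) := by
  obtain ⟨D, _, _, ι, hι, hfrac, extend⟩ := exists_divisionRing_fractions K R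
  choose E hE using fun ξ => extend (act ξ : R →ₐ[K] R) (act ξ).injective
  have hone : E 1 = AlgHom.id K D :=
    algHom_ext_of_fractions hι hfrac (by ext a; simp [hE])
  have hmul : ∀ ξ η, E (ξ * η) = (E ξ).comp (E η) := fun ξ η =>
    algHom_ext_of_fractions hι hfrac (by ext a; simp [hE])
  let actD : G →* (D ≃ₐ[K] D) :=
    { toFun ξ := AlgEquiv.ofAlgHom (E ξ) (E ξ⁻¹)
        (by rw [← hmul, mul_inv_cancel, hone]) (by rw [← hmul, inv_mul_cancel, hone])
      map_one' := by ext d; simp [hone]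
      map_mul' ξ η := by ext d; simp [hmul] }
  exact ⟨D, _, _, ι, actD, hι, hE⟩

end Fractions

/-! ### Commuting semisimple operators -/

section CommutingOperators

open Module.End Polynomial

section Cocycle

variable {K V ι : Type*} [CommRing K] [AddCommGroup V] [Module K V]

theorem exists_forall_eq_apply_of_mem_range (ψ : ι → Module.End K V) (S : Finset ι)
    (hcomm : ∀ i ∈ S, ∀ j ∈ S, Commute (ψ i) (ψ j))
    (hcompl : ∀ i ∈ S, IsCompl (LinearMap.ker (ψ i)) (LinearMap.range (ψ i))) (E : ι → V)
    (hE : ∀ i ∈ S, ∀ j ∈ S, ψ i (E j) = ψ j (E i))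
    (hrange : ∀ i ∈ S, E i ∈ LinearMap.range (ψ i)) :
    ∃ g, ∀ i ∈ S, E i = ψ i g := by
  classical
  induction S using Finset.induction_on with
  | empty => exact ⟨0, by simp⟩
  | insert j S _ ih =>
    have hj : j ∈ insert j S := Finset.mem_insert_self j S
    have hS : ∀ i ∈ S, i ∈ insert j S := fun i => Finset.mem_insert_of_mem
    obtain ⟨g, hg⟩ := ih (fun i hi t ht => hcomm i (hS i hi) t (hS t ht))
      (fun i hi => hcompl i (hS i hi)) (fun i hi t ht => hE i (hS i hi) t (hS t ht))
      (fun i hi => hrange i (hS i hi))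
    obtain ⟨w, hw⟩ := hrange j hj
    obtain ⟨e, he, k, hk, hek⟩ := Submodule.mem_sup.1
      ((hcompl j hj).sup_eq_top.symm ▸ Submodule.mem_top (x := w - g))
    have hjk : ψ j k = E j - ψ j g := by
      rw [← hw, ← map_sub, ← hek, map_add, LinearMap.mem_ker.1 he, zero_add]
    have hik : ∀ i ∈ S, ψ i k = 0 := fun i hi => by
      have hc := hcomm i (hS i hi) j hj
      refine Submodule.disjoint_def.1 (hcompl j hj).disjoint _ ?_ ?_
      · rw [LinearMap.mem_ker, ← mul_apply, ← hc.eq, mul_apply, hjk, map_sub,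
          hE i (hS i hi) j hj, hg i hi, ← mul_apply, ← mul_apply, hc.eq, sub_self]
      · obtain ⟨v, rfl⟩ := hk
        exact ⟨ψ i v, by rw [← mul_apply, ← hc.eq, mul_apply]⟩
    refine ⟨g + k, fun i hi => ?_⟩
    rcases Finset.mem_insert.1 hi with rfl | hi
    · rw [map_add, hjk, add_sub_cancel]
    · rw [map_add, hik i hi, add_zero, hg i hi]

theorem exists_forall_eq_apply (ψ : ι → Module.End K V) (S : Finset ι)
    (hcomm : ∀ i ∈ S, ∀ j ∈ S, Commute (ψ i) (ψ j))
    (hcompl : ∀ i ∈ S, IsCompl (LinearMap.ker (ψ i)) (LinearMap.range (ψ i))) (E : ι → V)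
    (hE : ∀ i ∈ S, ∀ j ∈ S, ψ i (E j) = ψ j (E i))
    (hker : ∀ e, (∀ i ∈ S, ψ i e = 0) → e = 0) :
    ∃ g, ∀ i ∈ S, E i = ψ i g := by
  refine exists_forall_eq_apply_of_mem_range ψ S hcomm hcompl E hE fun j hj => ?_
  obtain ⟨e, he, f, ⟨v, rfl⟩, hef⟩ := Submodule.mem_sup.1
    ((hcompl j hj).sup_eq_top.symm ▸ Submodule.mem_top (x := E j))
  suffices e = 0 from ⟨v, by rw [← hef, this, zero_add]⟩
  refine hker e fun i hi => Submodule.disjoint_def.1 (hcompl j hj).disjoint _ ?_ ?_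
  · rw [LinearMap.mem_ker, ← mul_apply, (hcomm j hj i hi).eq, mul_apply, LinearMap.mem_ker.1 he,
      map_zero]
  · refine ⟨E i - ψ i v, ?_⟩
    rw [map_sub, ← hE i hi j hj, ← hef, map_add, ← mul_apply, ← mul_apply,
      (hcomm j hj i hi).eq, add_sub_cancel_right]

end Cocycle

section Semisimple

variable {K V : Type*} [Field K] [AddCommGroup V] [Module K V] {f : Module.End K V}

theorem apply_aeval_of_intertwining {V' : Type*} [AddCommGroup V'] [Module K V']
    {f' : Module.End K V'} (φ : V →ₗ[K] V') (h : ∀ v, φ (f v) = f' (φ v)) (p : K[X]) (v : V) :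
    φ (aeval f p v) = aeval f' p (φ v) := by
  induction p using Polynomial.induction_on generalizing v with
  | C a => simp [Module.algebraMap_end_apply]
  | add p q hp hq => simp [hp, hq]
  | monomial n a ih => rw [pow_succ, ← mul_assoc, map_mul, map_mul _ _ X, mul_apply, mul_apply, ih,
      aeval_X, aeval_X, h]

theorem exists_aeval_X_mul_eq_zero {w : V} (hw : w ∈ ⨆ μ, eigenspace f μ) :
    ∃ q : K[X], q.coeff 0 ≠ 0 ∧ aeval f (X * q) w = 0 := by
  induction hw using Submodule.iSup_induction' with
  | mem μ w hw =>
    rw [mem_eigenspace_iff] at hw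
    by_cases hμ : μ = 0
    · exact ⟨1, by simp, by simp [hw, hμ]⟩
    · exact ⟨X - C μ, by simp [hμ], by simp [hw, Module.algebraMap_end_apply]⟩
  | zero => exact ⟨1, by simp, map_zero _⟩
  | add v w _ _ hv hw =>
    obtain ⟨p, hp0, hp⟩ := hv
    obtain ⟨q, hq0, hq⟩ := hw
    refine ⟨p * q, by simp [mul_coeff_zero, hp0, hq0], ?_⟩
    have hv : aeval f (X * (p * q)) v = 0 := by
      rw [show X * (p * q) = q * (X * p) by ring, map_mul, mul_apply, hp, map_zero]
    have hw : aeval f (X * (p * q)) w = 0 := by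
      rw [show X * (p * q) = p * (X * q) by ring, map_mul, mul_apply, hq, map_zero]
    rw [map_add, hv, hw, add_zero]

theorem isCompl_ker_range_of_forall_exists_aeval
    (h : ∀ w, ∃ q : K[X], q.coeff 0 ≠ 0 ∧ aeval f (X * q) w = 0) :
    IsCompl (LinearMap.ker f) (LinearMap.range f) := by
  have aeval_eq : ∀ (q : K[X]) w, aeval f q w = f (aeval f q.divX w) + q.coeff 0 • w :=
    fun q w => by
      conv_lhs => rw [← X_mul_divX_add q]
      rw [map_add, map_mul, aeval_X, aeval_C, LinearMap.add_apply, mul_apply,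
        Module.algebraMap_end_apply]
  have aeval_X_mul : ∀ (q : K[X]) w, aeval f (X * q) w = f (aeval f q w) := fun q w => by simp
  refine ⟨Submodule.disjoint_def.2 ?_, codisjoint_iff.2 <| eq_top_iff.2 fun w _ => ?_⟩
  · rintro _ hker ⟨w, rfl⟩
    obtain ⟨q, hq0, hq⟩ := h w
    have hcomm : aeval f (X * q) w = aeval f q (f w) := by
      rw [mul_comm, map_mul, mul_apply, aeval_X]
    rw [hcomm, aeval_eq, ← aeval_X_mul, mul_comm, map_mul, mul_apply, aeval_X,
      LinearMap.mem_ker.1 hker, map_zero, zero_add] at hq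
    exact (smul_eq_zero.1 hq).resolve_left hq0
  · obtain ⟨q, hq0, hq⟩ := h w
    have hw : w = (q.coeff 0)⁻¹ • aeval f q w
        + f ((q.coeff 0)⁻¹ • -aeval f q.divX w) := by
      rw [map_smul, map_neg, ← smul_add, aeval_eq, ← sub_eq_add_neg, add_sub_cancel_left,
        inv_smul_smul₀ hq0]
    rw [hw]
    refine Submodule.add_mem_sup (Submodule.smul_mem _ _ ?_) ⟨_, rfl⟩
    rwa [LinearMap.mem_ker, ← aeval_X_mul]

theorem isCompl_ker_range_restrict {W : Submodule K V} (hW : ∀ w ∈ W, f w ∈ W)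
    (hle : W ≤ ⨆ μ, eigenspace f μ) :
    IsCompl (LinearMap.ker (f.restrict hW)) (LinearMap.range (f.restrict hW)) := by
  refine isCompl_ker_range_of_forall_exists_aeval fun w => ?_
  obtain ⟨q, hq0, hq⟩ := exists_aeval_X_mul_eq_zero (hle w.2)
  refine ⟨q, hq0, W.subtype_injective ?_⟩
  rw [apply_aeval_of_intertwining (f' := f) W.subtype (fun _ => rfl), map_zero]
  exact hq

theorem exists_mem_forall_apply_sub_eq_zero {ι : Type*} [Finite ι] {ψ : ι → Module.End K V}
    (hcomm : ∀ i j, Commute (ψ i) (ψ j)) {W : Submodule K V} (hW : ∀ i, ∀ w ∈ W, ψ i w ∈ W)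
    (hle : ∀ i, W ≤ ⨆ μ, eigenspace (ψ i) μ) (hker : ∀ w ∈ W, (∀ i, ψ i w = 0) → w = 0) {x : V}
    (hx : ∀ i, ψ i x ∈ W) : ∃ g ∈ W, ∀ i, ψ i (x - g) = 0 := by
  have := Fintype.ofFinite ι
  obtain ⟨g, hg⟩ := exists_forall_eq_apply (fun i => (ψ i).restrict (hW i)) Finset.univ
    (fun i _ j _ => LinearMap.restrict_commute (hcomm i j) (hW i) (hW j))
    (fun i _ => isCompl_ker_range_restrict (hW i) (hle i)) (fun i => ⟨ψ i x, hx i⟩)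
    (fun i _ j _ => Subtype.ext (LinearMap.congr_fun (hcomm i j).eq x))
    (fun w hw => Subtype.ext <| hker w w.2 fun i => congrArg Subtype.val (hw i (Finset.mem_univ i)))
  refine ⟨g, g.2, fun i => ?_⟩
  rw [map_sub, sub_eq_zero]
  exact congrArg Subtype.val (hg i (Finset.mem_univ i))

end Semisimple

end CommutingOperators

/-! ### Degrees with respect to a skew derivation -/

section SkewDegree

section QFactorial

variable {K : Type*} [Field K] {q : K}

/-- The unnormalised `q`-factorial `(1 - q)(1 - q²) ⋯ (1 - qⁿ)`; leaving out the denominators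
`(1 - q)ⁿ` does not change the `q`-binomial coefficients. -/
def qFactorial (q : K) (n : ℕ) : K := ∏ i ∈ Finset.range n, (1 - q ^ (i + 1))

/-- The `q`-binomial coefficient of `n + m` over `m`. -/
def qBinomial (q : K) (n m : ℕ) : K := qFactorial q (n + m) / (qFactorial q n * qFactorial q m)

theorem qFactorial_succ (q : K) (n : ℕ) :
    qFactorial q (n + 1) = qFactorial q n * (1 - q ^ (n + 1)) :=
  Finset.prod_range_succ _ _

theorem qFactorial_ne_zero (hq : ∀ n : ℕ, n ≠ 0 → q ^ n ≠ 1) (n : ℕ) : qFactorial q n ≠ 0 :=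
  Finset.prod_ne_zero_iff.2 fun i _ => sub_ne_zero.2 (hq (i + 1) i.succ_ne_zero).symm

theorem qBinomial_ne_zero (hq : ∀ n : ℕ, n ≠ 0 → q ^ n ≠ 1) (n m : ℕ) : qBinomial q n m ≠ 0 :=
  div_ne_zero (qFactorial_ne_zero hq _)
    (mul_ne_zero (qFactorial_ne_zero hq n) (qFactorial_ne_zero hq m))

theorem qBinomial_zero_left (hq : ∀ n : ℕ, n ≠ 0 → q ^ n ≠ 1) (m : ℕ) : qBinomial q 0 m = 1 := by
  rw [qBinomial, zero_add, show qFactorial q 0 = 1 from Finset.prod_range_zero _, one_mul,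
    div_self (qFactorial_ne_zero hq m)]

theorem qBinomial_zero_right (hq : ∀ n : ℕ, n ≠ 0 → q ^ n ≠ 1) (n : ℕ) : qBinomial q n 0 = 1 := by
  rw [qBinomial, add_zero, mul_comm, ← qBinomial_zero_left hq n, qBinomial, zero_add]

theorem qBinomial_succ_succ (hq : ∀ n : ℕ, n ≠ 0 → q ^ n ≠ 1) (n m : ℕ) :
    qBinomial q (n + 1) (m + 1) =
      qBinomial q n (m + 1) + q ^ (n + 1) * qBinomial q (n + 1) m := by
  have hn := qFactorial_ne_zero hq n
  have hm := qFactorial_ne_zero hq m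
  have hn1 := sub_ne_zero.2 (hq (n + 1) n.succ_ne_zero).symm
  have hm1 := sub_ne_zero.2 (hq (m + 1) m.succ_ne_zero).symm
  rw [qBinomial, qBinomial, qBinomial, show n + 1 + (m + 1) = n + m + 1 + 1 by ring,
    show n + (m + 1) = n + m + 1 by ring, show n + 1 + m = n + m + 1 by ring]
  simp only [qFactorial_succ]
  field_simp
  ring

end QFactorial

variable {K : Type*} [Field K] {M : Type*} [Ring M] [Algebra K M] {x : M} {σ : M ≃ₐ[K] M}
  {q : Kˣ} {a b c w : M} {n m : ℕ}

theorem skewDer_map (hx : σ x = q • x) (a : M) :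
    skewDer x σ (σ a) = q⁻¹ • σ (skewDer x σ a) := by
  rw [eq_inv_smul_iff, skewDer_apply, skewDer_apply, map_sub, map_mul, map_mul, hx, smul_sub,
    smul_mul_assoc, mul_smul_comm]

theorem skewDer_pow_map (hx : σ x = q • x) (n : ℕ) (a : M) :
    (skewDer x σ ^ n) (σ a) = q⁻¹ ^ n • σ ((skewDer x σ ^ n) a) := by
  induction n with
  | zero => simp
  | succ n ih =>
    rw [pow_succ', Module.End.mul_apply, ih, LinearMap.map_smul_of_tower, skewDer_map hx, smul_smul,
      ← pow_succ, Module.End.mul_apply]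

theorem skewDer_map_pow (hx : σ x = q • x) (m : ℕ) (a : M) :
    skewDer x σ ((σ ^ m) a) = q⁻¹ ^ m • (σ ^ m) (skewDer x σ a) := by
  induction m with
  | zero => simp
  | succ m ih =>
    rw [pow_succ', AlgEquiv.mul_apply, skewDer_map hx, ih, Units.smul_def (q⁻¹ ^ m), map_smul,
      ← Units.smul_def, smul_smul, ← pow_succ', AlgEquiv.mul_apply]

theorem skewDer_pow_add_mul (hx : σ x = q • x) (hq : ∀ n : ℕ, n ≠ 0 → q ^ n ≠ 1)
    (ha : (skewDer x σ ^ (n + 1)) a = 0) (hb : (skewDer x σ ^ (m + 1)) b = 0) :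
    (skewDer x σ ^ (n + m)) (a * b) =
      qBinomial (q⁻¹ : K) n m • ((σ ^ m) ((skewDer x σ ^ n) a) * (skewDer x σ ^ m) b) := by
  have hq' : ∀ n : ℕ, n ≠ 0 → (q⁻¹ : K) ^ n ≠ 1 := fun n hn h =>
    hq n hn (Units.ext (by rwa [inv_pow, inv_eq_one] at h))
  have shift : ∀ (n : ℕ) (c : M), (skewDer x σ ^ (n + 1)) c = (skewDer x σ ^ n) (skewDer x σ c) :=
    fun n c => by rw [pow_succ, Module.End.mul_apply]
  have shift_map : ∀ (m : ℕ) (c : M), (σ ^ (m + 1)) c = (σ ^ m) (σ c) :=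
    fun m c => by rw [pow_succ, AlgEquiv.mul_apply]
  induction n generalizing m a b with
  | zero =>
    induction m generalizing a b with
    | zero => simp [qBinomial_zero_left hq']
    | succ m ih =>
      have ha' : skewDer x σ a = 0 := by simpa using ha
      have hσa : (skewDer x σ ^ (0 + 1)) (σ a) = 0 := by rw [skewDer_pow_map hx, ha]; simp
      have := ih hσa (by rwa [shift] at hb)
      rw [qBinomial_zero_left hq'] at this ⊢
      rw [← add_assoc, shift, skewDer_mul, ha', zero_mul, zero_add (σ a * _), this, shift,
        shift_map, pow_zero, Module.End.one_apply, Module.End.one_apply]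
  | succ n ihn =>
    induction m generalizing a b with
    | zero =>
      have hb' : skewDer x σ b = 0 := by simpa using hb
      have := ihn (m := 0) (by rwa [shift] at ha) hb
      rw [qBinomial_zero_right hq', add_zero] at this ⊢
      rw [shift, skewDer_mul, hb', mul_zero, add_zero, this, shift]
    | succ m ihm =>
      have hδa := ihn (by rwa [shift] at ha) hb
      have hσa := ihm (a := σ a) (by rw [skewDer_pow_map hx, ha]; simp) (by rwa [shift] at hb)
      rw [show n + (m + 1) = n + 1 + m by ring] at hδa
      rw [← add_assoc (n + 1), shift, skewDer_mul, map_add, hδa, hσa, skewDer_pow_map hx,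
        Units.smul_def, map_smul, ← shift_map, ← shift, ← shift, smul_mul_assoc, smul_smul,
        ← add_smul, qBinomial_succ_succ hq', mul_comm (qBinomial _ (n + 1) m),
        Units.val_pow_eq_pow_val, Units.val_inv_eq_inv_val]

/-- `a` has degree exactly `n` with respect to the skew derivation `skewDer x σ`. -/
def HasSkewDegree (x : M) (σ : M ≃ₐ[K] M) (a : M) (n : ℕ) : Prop :=
  (skewDer x σ ^ n) a ≠ 0 ∧ (skewDer x σ ^ (n + 1)) a = 0

theorem HasSkewDegree.unique (ha : HasSkewDegree x σ a n) (hb : HasSkewDegree x σ a m) :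
    n = m := by
  by_contra hne
  rcases Nat.lt_or_gt_of_ne hne with hlt | hlt
  · exact hb.1 (Module.End.pow_map_zero_of_le hlt ha.2)
  · exact ha.1 (Module.End.pow_map_zero_of_le hlt hb.2)

theorem exists_hasSkewDegree (ha : a ≠ 0) (hnil : ∃ n, (skewDer x σ ^ n) a = 0) :
    ∃ n, HasSkewDegree x σ a n := by
  classical
  obtain ⟨n, hn⟩ : ∃ n, Nat.find hnil = n + 1 :=
    Nat.exists_eq_succ_of_ne_zero fun h => ha <| by simpa [h] using Nat.find_spec hnil
  exact ⟨n, Nat.find_min hnil (hn ▸ n.lt_succ_self), hn ▸ Nat.find_spec hnil⟩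

theorem exists_hasSkewDegree_succ (ha : skewDer x σ a ≠ 0)
    (hnil : ∃ n, (skewDer x σ ^ n) a = 0) :
    ∃ n, HasSkewDegree x σ a (n + 1) ∧ HasSkewDegree x σ (skewDer x σ a) n := by
  obtain ⟨n, hn⟩ := exists_hasSkewDegree ha <| hnil.imp fun n hn => by
    rw [← Module.End.mul_apply, ← pow_succ, pow_succ', Module.End.mul_apply, hn, map_zero]
  refine ⟨n, ?_, hn⟩
  unfold HasSkewDegree at hn ⊢
  rwa [pow_succ _ n, pow_succ _ (n + 1), Module.End.mul_apply, Module.End.mul_apply]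

variable [NoZeroDivisors M]

theorem HasSkewDegree.mul (hx : σ x = q • x) (hq : ∀ n : ℕ, n ≠ 0 → q ^ n ≠ 1)
    (ha : HasSkewDegree x σ a n) (hb : HasSkewDegree x σ b m) :
    HasSkewDegree x σ (a * b) (n + m) := by
  have hab := skewDer_pow_add_mul hx hq ha.2 hb.2
  have hq' : ∀ n : ℕ, n ≠ 0 → (q⁻¹ : K) ^ n ≠ 1 := fun n hn h =>
    hq n hn (Units.ext (by rwa [inv_pow, inv_eq_one] at h))
  refine ⟨?_, ?_⟩
  · rw [hab]
    exact smul_ne_zero (qBinomial_ne_zero hq' n m) (mul_ne_zero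
      ((map_ne_zero_iff _ (σ ^ m).injective).2 ha.1) hb.1)
  · have ha0 := ha.2
    have hb0 := hb.2
    rw [pow_succ', Module.End.mul_apply] at ha0 hb0
    rw [pow_succ', Module.End.mul_apply, hab, map_smul, skewDer_mul, skewDer_map_pow hx, ha0, hb0,
      map_zero, smul_zero, zero_mul, mul_zero, add_zero, smul_zero]

theorem skewDer_eq_zero_of_eq_mul (hx : σ x = q • x) (hq : ∀ n : ℕ, n ≠ 0 → q ^ n ≠ 1)
    (hc : ∃ n, (skewDer x σ ^ n) c = 0) (hw : ∃ n, (skewDer x σ ^ n) w = 0)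
    (h : skewDer x σ c = w * c ∨ skewDer x σ c = c * w) : skewDer x σ c = 0 := by
  by_contra hne
  have hw0 : w ≠ 0 := by
    rintro rfl
    exact hne (by simpa using h)
  obtain ⟨m, hm⟩ := exists_hasSkewDegree hw0 hw
  obtain ⟨n, hn, hδ⟩ := exists_hasSkewDegree_succ hne hc
  rcases h with h | h <;> rw [h] at hδ
  · have := hδ.unique (hm.mul hx hq hn)
    omega
  · have := hδ.unique (hn.mul hx hq hm)
    omega

end SkewDegree

/-! ### Eigenvectors and quantum tori -/

section LeftFractions

variable {K : Type*} [CommRing K]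

/-- The left Ore condition for the nonzero elements of a subalgebra, stated inside the ambient
ring. -/
def IsLeftOre {M : Type*} [Ring M] [Algebra K M] (A : Subalgebra K M) : Prop :=
  ∀ a ∈ A, ∀ b ∈ A, a ≠ 0 → ∃ c ∈ A, ∃ d ∈ A, c ≠ 0 ∧ c * b = d * a

variable {D : Type*} [DivisionRing D] [Algebra K D] {A : Subalgebra K D}

theorem isLeftOre_of_isNoetherianRing [IsNoetherianRing A] : IsLeftOre A := fun a ha b hb ha0 => by
  obtain ⟨c, d, hc, h⟩ := exists_mul_eq_mul_of_ne_zero (⟨b, hb⟩ : A) (a := ⟨a, ha⟩)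
    fun h => ha0 (congrArg Subtype.val h)
  exact ⟨c, c.2, d, d.2, fun h => hc (Subtype.ext h), congrArg Subtype.val h⟩

/-- The subalgebra of left fractions `u⁻¹ * a` with `u` and `a` in `A`. -/
def leftFractions (A : Subalgebra K D) (hA : IsLeftOre A) : Subalgebra K D where
  carrier := {d | ∃ u ∈ A, u ≠ 0 ∧ u * d ∈ A}
  mul_mem' := by
    rintro d e ⟨u, hu, hu0, hd⟩ ⟨v, hv, hv0, he⟩
    obtain ⟨c, hc, w, hw, hc0, h⟩ := hA v hv _ hd hv0
    refine ⟨c * u, A.mul_mem hc hu, mul_ne_zero hc0 hu0, ?_⟩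
    rw [← mul_assoc, mul_assoc c, h, mul_assoc]
    exact A.mul_mem hw he
  add_mem' := by
    rintro d e ⟨u, hu, hu0, hd⟩ ⟨v, hv, hv0, he⟩
    obtain ⟨c, hc, w, hw, hc0, h⟩ := hA v hv _ hu hv0
    refine ⟨c * u, A.mul_mem hc hu, mul_ne_zero hc0 hu0, ?_⟩
    rw [mul_add, mul_assoc c, h, mul_assoc w]
    exact A.add_mem (A.mul_mem hc hd) (A.mul_mem hw he)
  algebraMap_mem' c := ⟨1, A.one_mem, one_ne_zero, by rw [one_mul]; exact A.algebraMap_mem c⟩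

theorem le_leftFractions (hA : IsLeftOre A) : A ≤ leftFractions A hA := fun a ha =>
  ⟨1, A.one_mem, one_ne_zero, by rwa [one_mul]⟩

theorem inv_mem_leftFractions (hA : IsLeftOre A) {d : D} (hd : d ∈ leftFractions A hA) :
    d⁻¹ ∈ leftFractions A hA := by
  rcases eq_or_ne d 0 with rfl | hd0
  · rw [inv_zero]
    exact Subalgebra.zero_mem _
  · obtain ⟨u, hu, hu0, hud⟩ := hd
    exact ⟨u * d, hud, mul_ne_zero hu0 hd0, by rwa [mul_inv_cancel_right₀ hd0]⟩

end LeftFractions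

section Eigenvectors

variable {K : Type u} [Field K] {r : ℕ} {f f' : Fin r → ℤ}

/-- The character of the torus with exponent vector `f`. -/
def chi (f : Fin r → ℤ) (ξ : Torus K r) : Kˣ := ∏ i, ξ i ^ f i

theorem chi_add (f f' : Fin r → ℤ) (ξ : Torus K r) : chi (f + f') ξ = chi f ξ * chi f' ξ := by
  simp [chi, zpow_add, Finset.prod_mul_distrib]

theorem chi_neg (f : Fin r → ℤ) (ξ : Torus K r) : chi (-f) ξ = (chi f ξ)⁻¹ := by
  simp [chi]

theorem chi_zero (ξ : Torus K r) : chi (0 : Fin r → ℤ) ξ = 1 := by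
  simp [chi]

section Ring

variable {M : Type v} [Ring M] [Algebra K M] {act : Torus K r →* (M ≃ₐ[K] M)} {a b : M}

theorem isEigenWith_iff : IsEigenWith K act f a ↔ ∀ ξ, act ξ a = chi f ξ • a := Iff.rfl

theorem IsEigenWith.act_eq (h : IsEigenWith K act f a) (ξ : Torus K r) : act ξ a = chi f ξ • a :=
  h ξ

theorem IsEigenWith.zero : IsEigenWith K act f 0 := isEigenWith_iff.2 fun ξ => by
  rw [map_zero, smul_zero]

theorem IsEigenWith.one : IsEigenWith K act 0 1 := isEigenWith_iff.2 fun ξ => by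
  rw [map_one, chi_zero, one_smul]

theorem IsEigenWith.mul (ha : IsEigenWith K act f a) (hb : IsEigenWith K act f' b) :
    IsEigenWith K act (f + f') (a * b) := isEigenWith_iff.2 fun ξ => by
  rw [map_mul, ha.act_eq, hb.act_eq, chi_add, smul_mul_smul_comm]

theorem IsEigenWith.add (ha : IsEigenWith K act f a) (hb : IsEigenWith K act f b) :
    IsEigenWith K act f (a + b) := isEigenWith_iff.2 fun ξ => by
  rw [map_add, ha.act_eq, hb.act_eq, smul_add]

theorem IsEigenWith.smul (c : K) (ha : IsEigenWith K act f a) : IsEigenWith K act f (c • a) :=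
  isEigenWith_iff.2 fun ξ => by rw [map_smul, ha.act_eq, smul_comm]

/-- The space of eigenvectors of `act` with character `f`, together with `0`. -/
def weightSpace (act : Torus K r →* (M ≃ₐ[K] M)) (f : Fin r → ℤ) : Submodule K M where
  carrier := {a | IsEigenWith K act f a}
  zero_mem' := IsEigenWith.zero
  add_mem' := IsEigenWith.add
  smul_mem' c _ := IsEigenWith.smul c

theorem IsEigenWith.sub (ha : IsEigenWith K act f a) (hb : IsEigenWith K act f b) :
    IsEigenWith K act f (a - b) :=
  Submodule.sub_mem (weightSpace act f) ha hb

end Ring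

theorem IsEigenWith.inv {D : Type v} [DivisionRing D] [Algebra K D]
    {act : Torus K r →* (D ≃ₐ[K] D)} {a : D} (ha : IsEigenWith K act f a) :
    IsEigenWith K act (-f) a⁻¹ := isEigenWith_iff.2 fun ξ => by
  rw [map_inv₀, ha.act_eq, chi_neg, Units.smul_def, smul_inv₀, Units.smul_def,
    Units.val_inv_eq_inv_val]

end Eigenvectors

section QuantumTorus

section Ring

variable {K : Type*} [CommRing K] {M : Type*} [Ring M] [Algebra K M]

/-- The elements of `A` which the skew derivation `x * a - σ a * x` maps into `A`. -/
def skewDerStable (A : Subalgebra K M) (x : M) (σ : M ≃ₐ[K] M) (hσ : ∀ a ∈ A, σ a ∈ A) :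
    Subalgebra K M where
  carrier := {a | a ∈ A ∧ skewDer x σ a ∈ A}
  mul_mem' {a b} ha hb := ⟨A.mul_mem ha.1 hb.1, by
    rw [skewDer_mul]
    exact A.add_mem (A.mul_mem ha.2 hb.1) (A.mul_mem (hσ a ha.1) hb.2)⟩
  add_mem' ha hb := ⟨A.add_mem ha.1 hb.1, by rw [map_add]; exact A.add_mem ha.2 hb.2⟩
  algebraMap_mem' c := ⟨A.algebraMap_mem c, by
    rw [skewDer_apply, AlgEquiv.commutes, ← Algebra.commutes, sub_self]
    exact A.zero_mem⟩

end Ring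

variable {K : Type*} [CommRing K] {D : Type*} [DivisionRing D] [Algebra K D] {S S' : Set D}
  {x y t t' : D} {σ : D ≃ₐ[K] D}

theorem skewDer_inv (ha : t ≠ 0) : skewDer x σ t⁻¹ = -(σ t⁻¹ * skewDer x σ t * t⁻¹) := by
  have h : σ t ≠ 0 := (map_ne_zero_iff _ σ.injective).2 ha
  rw [skewDer_apply, skewDer_apply, map_inv₀, mul_sub, sub_mul, inv_mul_cancel_left₀ h,
    ← mul_assoc, mul_inv_cancel_right₀ ha, neg_sub]

theorem inv_mem_skewDerStable {A : Subalgebra K D} {hσ : ∀ a ∈ A, σ a ∈ A} (hA : t⁻¹ ∈ A)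
    (ht : t ∈ skewDerStable A x σ hσ) : t⁻¹ ∈ skewDerStable A x σ hσ := by
  rcases eq_or_ne t 0 with rfl | ht0
  · rwa [inv_zero]
  · refine ⟨hA, ?_⟩
    rw [skewDer_inv ht0]
    exact A.neg_mem (A.mul_mem (A.mul_mem (hσ _ hA) ht.2) hA)

/-- The subalgebra generated by `S` and the inverses of the elements of `S`; it is a quotient of a
quantum torus when `S` consists of nonzero elements commuting up to scalars. -/
def quantumTorus (K : Type*) [CommRing K] [Algebra K D] (S : Set D) : Subalgebra K D :=
  Algebra.adjoin K (S ∪ (·⁻¹) '' S)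

theorem mem_quantumTorus (ht : t ∈ S) : t ∈ quantumTorus K S :=
  Algebra.subset_adjoin (Or.inl ht)

theorem inv_mem_quantumTorus (ht : t ∈ S) : t⁻¹ ∈ quantumTorus K S :=
  Algebra.subset_adjoin (Or.inr ⟨t, ht, rfl⟩)

theorem quantumTorus_mono (h : S ⊆ S') : quantumTorus K S ≤ quantumTorus K S' :=
  Algebra.adjoin_mono (Set.union_subset_union h (Set.image_mono h))

theorem quantumTorus_le {C : Subalgebra K D} (hC : ∀ t ∈ S, t ∈ C) (hC' : ∀ t ∈ S, t⁻¹ ∈ C) :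
    quantumTorus K S ≤ C := by
  refine Algebra.adjoin_le ?_
  rintro _ (ht | ⟨t, ht, rfl⟩)
  exacts [hC _ ht, hC' _ ht]

theorem quantumTorus_empty : quantumTorus K (∅ : Set D) = ⊥ := by
  rw [quantumTorus, Set.image_empty, Set.union_empty, Algebra.adjoin_empty]

/-- Conjugation by `t` twisted by `σ`: its fixed vectors `y` satisfy `y * t = σ t * y`. -/
def twistedConj (σ : D ≃ₐ[K] D) (t : D) : Module.End K D :=
  LinearMap.mulLeft K (σ t) ∘ₗ LinearMap.mulRight K t⁻¹

theorem twistedConj_apply (σ : D ≃ₐ[K] D) (t y : D) : twistedConj σ t y = σ t * (y * t⁻¹) := rfl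

theorem sub_twistedConj (ht : t ≠ 0) : y - twistedConj σ t y = skewDer y σ t * t⁻¹ := by
  rw [twistedConj_apply, skewDer_apply, sub_mul, mul_inv_cancel_right₀ ht, mul_assoc]

theorem twistedConj_mul : twistedConj σ (t * t') = twistedConj σ t * twistedConj σ t' := by
  ext y
  simp only [Module.End.mul_apply, twistedConj_apply, map_mul, mul_inv_rev, mul_assoc]

theorem twistedConj_units_smul (q : Kˣ) : twistedConj σ (q • t) = twistedConj σ t := by
  ext y
  rcases eq_or_ne t 0 with rfl | ht
  · rw [smul_zero]
  have hinv : (q • t)⁻¹ = q⁻¹ • t⁻¹ := by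
    refine inv_eq_of_mul_eq_one_right ?_
    rw [smul_mul_smul_comm, mul_inv_cancel, one_smul, mul_inv_cancel₀ ht]
  rw [twistedConj_apply, twistedConj_apply, hinv, Units.smul_def, map_smul, ← Units.smul_def,
    mul_smul_comm, smul_mul_smul_comm, mul_inv_cancel, one_smul]

theorem commute_twistedConj {q : Kˣ} (h : t * t' = q • (t' * t)) :
    Commute (twistedConj σ t) (twistedConj σ t') := by
  rw [Commute, SemiconjBy, ← twistedConj_mul, h, twistedConj_units_smul, twistedConj_mul]

theorem twistedConj_mem {C : Subalgebra K D} (hσ : σ t ∈ C) (ht : t⁻¹ ∈ C) (hy : y ∈ C) :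
    twistedConj σ t y ∈ C :=
  C.mul_mem hσ (C.mul_mem hy ht)

theorem mul_eq_mul_of_mem_quantumTorus (hS : ∀ t ∈ S, t ≠ 0)
    (hy : ∀ t ∈ S, twistedConj σ t y = y) (ht : t ∈ quantumTorus K S) : y * t = σ t * y := by
  have hgen : ∀ t ∈ S, y * t = σ t * y := fun t ht => by
    have h := hy t ht
    rw [twistedConj_apply, ← mul_assoc, mul_inv_eq_iff_eq_mul₀ (hS t ht)] at h
    exact h.symm
  rw [quantumTorus] at ht
  induction ht using Algebra.adjoin_induction with
  | mem t ht =>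
    rcases ht with ht | ⟨t, ht, rfl⟩
    · exact hgen t ht
    · have hσ : σ t ≠ 0 := (map_ne_zero_iff _ σ.injective).2 (hS t ht)
      rw [map_inv₀, mul_inv_eq_iff_eq_mul₀ (hS t ht), mul_assoc, hgen t ht,
        inv_mul_cancel_left₀ hσ]
  | algebraMap c => rw [AlgEquiv.commutes, Algebra.commutes]
  | add a b _ _ ha hb => rw [mul_add, ha, hb, map_add, add_mul]
  | mul a b _ _ ha hb => rw [← mul_assoc, ha, mul_assoc, hb, map_mul, mul_assoc]

theorem exists_mul_eq_smul_mul_of_mem_closure (hS : ∀ t ∈ S, t ≠ 0)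
    (hq : ∀ t' ∈ S, ∃ q : Kˣ, t * t' = q • (t' * t)) {m : D}
    (hm : m ∈ Submonoid.closure (S ∪ (·⁻¹) '' S)) : ∃ q : Kˣ, t * m = q • (m * t) := by
  induction hm using Submonoid.closure_induction with
  | mem y hy =>
    rcases hy with hy | ⟨y, hy, rfl⟩
    · exact hq y hy
    · obtain ⟨q, h⟩ := hq y hy
      refine ⟨q⁻¹, ?_⟩
      rw [mul_inv_eq_iff_eq_mul₀ (hS y hy), smul_mul_assoc, eq_inv_smul_iff, mul_assoc, h,
        mul_smul_comm, inv_mul_cancel_left₀ (hS y hy)]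
  | one => exact ⟨1, by rw [one_smul, mul_one, one_mul]⟩
  | mul a b _ _ ha hb =>
    obtain ⟨q, hqa⟩ := ha
    obtain ⟨q', hqb⟩ := hb
    refine ⟨q * q', ?_⟩
    rw [← mul_assoc, hqa, smul_mul_assoc, mul_assoc, hqb, mul_smul_comm, smul_smul, mul_assoc]

theorem quantumTorus_le_iSup_eigenspace (hS : ∀ t ∈ S, t ≠ 0) (ht : t ∈ S)
    (hq : ∀ t' ∈ S, ∃ q : Kˣ, t * t' = q • (t' * t)) (hσ : ∃ c : Kˣ, σ t = c • t) :
    (quantumTorus K S).toSubmodule ≤ ⨆ μ, Module.End.eigenspace (1 - twistedConj σ t) μ := by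
  obtain ⟨c, hc⟩ := hσ
  rw [quantumTorus, Algebra.adjoin_eq_span, Submodule.span_le]
  intro m hm
  obtain ⟨q, h⟩ := exists_mul_eq_smul_mul_of_mem_closure hS hq hm
  refine Submodule.mem_iSup_of_mem (1 - (c * q : K)) (Module.End.mem_eigenspace_iff.2 ?_)
  rw [LinearMap.sub_apply, Module.End.one_apply, twistedConj_apply, hc, ← mul_assoc,
    smul_mul_assoc, h, smul_mul_assoc, smul_mul_assoc, mul_inv_cancel_right₀ (hS t ht), sub_smul,
    one_smul, smul_smul, Units.smul_def, Units.val_mul]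

end QuantumTorus

section InnerDerivation

variable {K : Type u} [Field K] {D : Type v} [DivisionRing D] [Algebra K D] {r : ℕ}
  {act : Torus K r →* (D ≃ₐ[K] D)} {A B : Subalgebra K D} {S : Set D} {x g t y : D}
  {h : Torus K r} {f fx : Fin r → ℤ}

theorem IsEigenWith.twistedConj (ht : IsEigenWith K act f t) (hy : IsEigenWith K act fx y) :
    IsEigenWith K act fx (twistedConj (act h) t y) := by
  have key := (ht.mul (hy.mul ht.inv)).smul (chi f h : K)
  rwa [show f + (fx + -f) = fx by abel, ← Units.smul_def, ← smul_mul_assoc, ← ht.act_eq] at key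

theorem act_mem_quantumTorus (hS : ∀ t ∈ S, ∃ f, IsEigenWith K act f t) (ξ : Torus K r)
    (ht : t ∈ quantumTorus K S) : act ξ t ∈ quantumTorus K S := by
  have hC : quantumTorus K S ≤ (quantumTorus K S).comap (act ξ : D →ₐ[K] D) := by
    refine quantumTorus_le (fun t ht => ?_) fun t ht => ?_
    all_goals
      obtain ⟨f, hf⟩ := hS t ht
      rw [Subalgebra.mem_comap, AlgEquiv.coe_toAlgHom]
    · rw [hf.act_eq]
      exact Subalgebra.smul_mem _ (mem_quantumTorus ht) _
    · rw [hf.inv.act_eq]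
      exact Subalgebra.smul_mem _ (inv_mem_quantumTorus ht) _
  exact hC ht

/-- `S` is a finite set of nonzero eigenvectors, commuting with each other up to scalars, whose
quantum torus is the smallest subalgebra which contains `A` and the inverses of those elements of
`S` that it contains. -/
structure IsQuantumTorusHull (act : Torus K r →* (D ≃ₐ[K] D)) (A : Subalgebra K D) (S : Set D) :
    Prop where
  finite : S.Finite
  ne_zero : ∀ t ∈ S, t ≠ 0
  exists_isEigenWith : ∀ t ∈ S, ∃ f, IsEigenWith K act f t
  exists_mul_eq_smul_mul : ∀ t ∈ S, ∀ t' ∈ S, ∃ q : Kˣ, t * t' = q • (t' * t)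
  le : A ≤ quantumTorus K S
  quantumTorus_le_of_le : ∀ C : Subalgebra K D, A ≤ C → (∀ t ∈ S, t ∈ C → t⁻¹ ∈ C) →
    quantumTorus K S ≤ C

theorem IsQuantumTorusHull.bot : IsQuantumTorusHull act ⊥ ∅ where
  finite := Set.finite_empty
  ne_zero := by simp
  exists_isEigenWith := by simp
  exists_mul_eq_smul_mul := by simp
  le := bot_le
  quantumTorus_le_of_le C hC _ := by rwa [quantumTorus_empty]

theorem IsQuantumTorusHull.quantumTorus_le_leftFractions (G : IsQuantumTorusHull act A S)
    (hA : IsLeftOre A) : quantumTorus K S ≤ leftFractions A hA :=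
  G.quantumTorus_le_of_le _ (le_leftFractions hA) fun _ _ => inv_mem_leftFractions hA

theorem IsQuantumTorusHull.skewDer_mem (G : IsQuantumTorusHull act A S) {ξ : Torus K r}
    (hx : ∀ a ∈ A, skewDer x (act ξ) a ∈ A) (ht : t ∈ quantumTorus K S) :
    skewDer x (act ξ) t ∈ quantumTorus K S := by
  have hσ : ∀ t ∈ quantumTorus K S, act ξ t ∈ quantumTorus K S := fun t =>
    act_mem_quantumTorus G.exists_isEigenWith ξ
  have hle := G.quantumTorus_le_of_le (skewDerStable _ x (act ξ) hσ)
    (fun a ha => ⟨G.le ha, G.le (hx a ha)⟩)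
    fun t ht => inv_mem_skewDerStable (inv_mem_quantumTorus ht)
  exact (hle ht).2

/-- One step of a Cauchon-Goodearl-Letzter extension, inside a division ring: `B = A[x; σ, δ]` with
`σ` the action of `h`, `δ` locally nilpotent, and `x` an eigenvector with character `fx` on which
the eigenvalue of `h` is not a root of unity. -/
structure IsCGLStep (act : Torus K r →* (D ≃ₐ[K] D)) (A B : Subalgebra K D) (x : D)
    (h : Torus K r) (fx : Fin r → ℤ) : Prop where
  isOreExtension : IsOreExtension A B x (act h)
  isEigenWith_gen : IsEigenWith K act fx x
  act_mem : ∀ ξ, ∀ a ∈ A, act ξ a ∈ A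
  chi_pow_ne_one : ∀ n : ℕ, n ≠ 0 → chi fx h ^ n ≠ 1
  locally_nilpotent : ∀ a ∈ A, ∃ n, (skewDer x (act h) ^ n) a = 0

theorem eq_zero_of_forall_twistedConj_eq (hS : ∀ t ∈ S, t ≠ 0) (hne : chi fx h ≠ 1)
    (hy : y ∈ quantumTorus K S) (hyf : IsEigenWith K act fx y)
    (hfix : ∀ t ∈ S, twistedConj (act h) t y = y) : y = 0 := by
  by_contra hy0
  have hyy := mul_eq_mul_of_mem_quantumTorus hS hfix hy
  rw [hyf.act_eq, smul_mul_assoc, Units.smul_def] at hyy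
  have h0 : ((chi fx h : K) - 1) • (y * y) = 0 := by rw [sub_smul, ← hyy, one_smul, sub_self]
  exact hne (Units.ext (sub_eq_zero.1 ((smul_eq_zero.1 h0).resolve_right (mul_ne_zero hy0 hy0))))

theorem IsQuantumTorusHull.sub_twistedConj_mem (G : IsQuantumTorusHull act A S) (ht : t ∈ S)
    (hx : ∀ a ∈ A, skewDer x (act h) a ∈ A) (hxf : IsEigenWith K act fx x) :
    (1 - twistedConj (act h) t) x ∈ (quantumTorus K S).toSubmodule ⊓ weightSpace act fx := by
  obtain ⟨f, hf⟩ := G.exists_isEigenWith t ht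
  refine ⟨?_, hxf.sub (hf.twistedConj hxf)⟩
  change x - twistedConj (act h) t x ∈ quantumTorus K S
  rw [sub_twistedConj (G.ne_zero t ht)]
  exact Subalgebra.mul_mem _ (G.skewDer_mem hx (mem_quantumTorus ht)) (inv_mem_quantumTorus ht)

theorem IsQuantumTorusHull.exists_inner (G : IsQuantumTorusHull act A S)
    (C : IsCGLStep act A B x h fx) :
    ∃ g ∈ quantumTorus K S, IsEigenWith K act fx g ∧
      ∀ t ∈ quantumTorus K S, (x - g) * t = act h t * (x - g) := by
  have := G.finite.to_subtype
  have hne : chi fx h ≠ 1 := by simpa using C.chi_pow_ne_one 1 one_ne_zero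
  obtain ⟨g, hg, hfix⟩ := exists_mem_forall_apply_sub_eq_zero
    (ψ := fun t : S => 1 - twistedConj (act h) t.1)
    (W := (quantumTorus K S).toSubmodule ⊓ weightSpace act fx)
    (fun t t' => by
      obtain ⟨q, hq⟩ := G.exists_mul_eq_smul_mul t t.2 t' t'.2
      exact (Commute.one_left _).sub_left
        ((Commute.one_right _).sub_right (commute_twistedConj hq)))
    (fun t w hw => by
      obtain ⟨f, hf⟩ := G.exists_isEigenWith t t.2
      exact Submodule.sub_mem _ hw ⟨twistedConj_mem (act_mem_quantumTorus G.exists_isEigenWith h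
        (mem_quantumTorus t.2)) (inv_mem_quantumTorus t.2) hw.1, hf.twistedConj hw.2⟩)
    (fun t => inf_le_left.trans <| by
      obtain ⟨f, hf⟩ := G.exists_isEigenWith t t.2
      exact quantumTorus_le_iSup_eigenspace G.ne_zero t.2 (G.exists_mul_eq_smul_mul t t.2)
        ⟨chi f h, hf.act_eq h⟩)
    (fun y hy hfix => eq_zero_of_forall_twistedConj_eq G.ne_zero hne hy.1 hy.2
      fun t ht => (sub_eq_zero.1 (hfix ⟨t, ht⟩)).symm)
    (fun t => G.sub_twistedConj_mem t.2 C.isOreExtension.skewDer_mem C.isEigenWith_gen)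
  exact ⟨g, hg.1, hg.2, fun t => mul_eq_mul_of_mem_quantumTorus G.ne_zero
    fun t ht => (sub_eq_zero.1 (hfix ⟨t, ht⟩)).symm⟩

theorem IsQuantumTorusHull.insert_sub (G : IsQuantumTorusHull act A S)
    (H : IsOreExtension A B x (act h)) (hg : g ∈ quantumTorus K S)
    (hxg : IsEigenWith K act fx (x - g)) (hxg0 : x - g ≠ 0)
    (hcomm : ∀ t ∈ quantumTorus K S, (x - g) * t = act h t * (x - g)) :
    IsQuantumTorusHull act B (insert (x - g) S) := by
  have hq : ∀ t ∈ S, ∃ q : Kˣ, (x - g) * t = q • (t * (x - g)) := fun t ht => by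
    obtain ⟨f, hf⟩ := G.exists_isEigenWith t ht
    exact ⟨chi f h, by rw [hcomm t (mem_quantumTorus ht), hf.act_eq, smul_mul_assoc]⟩
  have hS : quantumTorus K S ≤ quantumTorus K (insert (x - g) S) :=
    quantumTorus_mono (Set.subset_insert _ _)
  refine ⟨G.finite.insert _, ?_, ?_, ?_, fun b hb => ?_, fun C hBC hC => ?_⟩
  · rintro t (rfl | ht)
    exacts [hxg0, G.ne_zero t ht]
  · rintro t (rfl | ht)
    exacts [⟨fx, hxg⟩, G.exists_isEigenWith t ht]
  · rintro t (rfl | ht) t' (rfl | ht')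
    · exact ⟨1, (one_smul _ _).symm⟩
    · exact hq t' ht'
    · obtain ⟨q, h⟩ := hq t ht
      exact ⟨q⁻¹, by rw [h, inv_smul_smul]⟩
    · exact G.exists_mul_eq_smul_mul t ht t' ht'
  · have hx : x ∈ quantumTorus K (insert (x - g) S) := by
      simpa using Subalgebra.add_mem _ (mem_quantumTorus (Set.mem_insert (x - g) S)) (hS hg)
    obtain ⟨n, a, ha, rfl⟩ := H.exists_mem_polyLT b hb
    exact Subalgebra.sum_mem _ fun i _ => Subalgebra.mul_mem _ (hS (G.le (ha i)))
      (Subalgebra.pow_mem _ hx i)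
  · have hSC : quantumTorus K S ≤ C :=
      G.quantumTorus_le_of_le C (H.le.trans hBC) fun t ht => hC t (Set.mem_insert_of_mem _ ht)
    have hmem : ∀ t ∈ insert (x - g) S, t ∈ C := by
      rintro t (rfl | ht)
      exacts [C.sub_mem (hBC H.gen_mem) (hSC hg), hSC (mem_quantumTorus ht)]
    exact quantumTorus_le hmem fun t ht => hC t ht (hmem t ht)

theorem IsCGLStep.act_mem_right (C : IsCGLStep act A B x h fx) (ξ : Torus K r) {b : D}
    (hb : b ∈ B) : act ξ b ∈ B := by
  obtain ⟨n, a, ha, rfl⟩ := C.isOreExtension.exists_mem_polyLT b hb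
  rw [map_sum]
  refine Subalgebra.sum_mem _ fun i _ => ?_
  rw [map_mul, map_pow, C.isEigenWith_gen.act_eq]
  exact B.mul_mem (C.isOreExtension.le (C.act_mem ξ _ (ha i)))
    (B.pow_mem (B.smul_mem C.isOreExtension.gen_mem _) i)

theorem IsCGLStep.mul_gen_ne (C : IsCGLStep act A B x h fx) {a u : D} (hu : u ∈ A) (hu0 : u ≠ 0)
    (ha : a ∈ A) : u * x ≠ a := fun hux => by
  refine hu0 (C.isOreExtension.eq_zero_of_mul_gen_pow_mem_polyLT (n := 1) hu ?_)
  rw [pow_one, hux]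
  simpa using mul_gen_pow_mem_polyLT (x := x) (n := 0) ha

end InnerDerivation

/-! ### Homogeneous primes and minimal denominators -/

section HomogeneousPrimes

variable {K : Type u} [Field K] {D : Type v} [DivisionRing D] [Algebra K D] {r : ℕ}
  {act : Torus K r →* (D ≃ₐ[K] D)} {A : Subalgebra K D} {a c p q v : D} {l : List D}

/-- A nonzero normal element of the subalgebra `A` which is an eigenvector of the torus. Normality
is stated in the ambient division ring, as stability of `A` under conjugation by `p`. -/
structure IsNormalEigen (act : Torus K r →* (D ≃ₐ[K] D)) (A : Subalgebra K D) (p : D) : Prop where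
  mem : p ∈ A
  ne_zero : p ≠ 0
  inv_mul_mul_mem : ∀ a ∈ A, p⁻¹ * a * p ∈ A
  mul_mul_inv_mem : ∀ a ∈ A, p * a * p⁻¹ ∈ A
  exists_isEigenWith : ∃ f, IsEigenWith K act f p

/-- A homogeneous prime element of the subalgebra `A`. In the ambient division ring, `p` divides
`a` if and only if `p⁻¹ * a` belongs to `A`. -/
structure IsHomogPrime (act : Torus K r →* (D ≃ₐ[K] D)) (A : Subalgebra K D) (p : D) : Prop
    extends IsNormalEigen act A p where
  inv_notMem : p⁻¹ ∉ A
  mem_or_mem : ∀ a ∈ A, ∀ b ∈ A, p⁻¹ * (a * b) ∈ A → p⁻¹ * a ∈ A ∨ p⁻¹ * b ∈ A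

theorem IsNormalEigen.one : IsNormalEigen act A 1 :=
  ⟨A.one_mem, one_ne_zero, by simp, by simp, 0, IsEigenWith.one⟩

theorem IsNormalEigen.mul (hp : IsNormalEigen act A p) (hq : IsNormalEigen act A q) :
    IsNormalEigen act A (p * q) := by
  obtain ⟨f, hf⟩ := hp.exists_isEigenWith
  obtain ⟨f', hf'⟩ := hq.exists_isEigenWith
  refine ⟨A.mul_mem hp.mem hq.mem, mul_ne_zero hp.ne_zero hq.ne_zero, fun a ha => ?_,
    fun a ha => ?_, _, hf.mul hf'⟩
  · simpa only [mul_inv_rev, mul_assoc] using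
      hq.inv_mul_mul_mem _ (hp.inv_mul_mul_mem a ha)
  · simpa only [mul_inv_rev, mul_assoc] using
      hp.mul_mul_inv_mem _ (hq.mul_mul_inv_mem a ha)

theorem IsNormalEigen.list_prod (hl : ∀ p ∈ l, IsHomogPrime act A p) :
    IsNormalEigen act A l.prod := by
  induction l with
  | nil => exact .one
  | cons p l ih =>
    obtain ⟨hp, hl⟩ := List.forall_mem_cons.1 hl
    exact List.prod_cons (a := p) ▸ hp.toIsNormalEigen.mul (ih hl)

theorem IsNormalEigen.inv_mul_mem_iff (hp : IsNormalEigen act A p) :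
    p⁻¹ * a ∈ A ↔ a * p⁻¹ ∈ A := by
  constructor <;> intro h
  · simpa only [mul_inv_cancel_left₀ hp.ne_zero] using hp.mul_mul_inv_mem _ h
  · simpa only [mul_assoc, inv_mul_cancel₀ hp.ne_zero, mul_one] using hp.inv_mul_mul_mem _ h

theorem IsHomogPrime.map {F : Type*} [EquivLike F D D] [RingEquivClass F D D]
    (hp : IsHomogPrime act A p) (φ : F) (hφ : ∀ a, φ a ∈ A ↔ a ∈ A)
    (hφp : ∃ f, IsEigenWith K act f (φ p)) : IsHomogPrime act A (φ p) := by
  refine ⟨⟨(hφ p).2 hp.mem, (map_ne_zero φ).2 hp.ne_zero, fun a ha => ?_, fun a ha => ?_, hφp⟩,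
    fun h => ?_, fun a ha b hb h => ?_⟩
  · obtain ⟨a, rfl⟩ := EquivLike.surjective φ a
    simpa only [← map_inv₀, ← map_mul, hφ] using hp.inv_mul_mul_mem a ((hφ a).1 ha)
  · obtain ⟨a, rfl⟩ := EquivLike.surjective φ a
    simpa only [← map_inv₀, ← map_mul, hφ] using hp.mul_mul_inv_mem a ((hφ a).1 ha)
  · rw [← map_inv₀, hφ] at h
    exact hp.inv_notMem h
  · obtain ⟨a, rfl⟩ := EquivLike.surjective φ a
    obtain ⟨b, rfl⟩ := EquivLike.surjective φ b
    simp only [← map_inv₀, ← map_mul, hφ] at h ⊢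
    exact hp.mem_or_mem a ((hφ a).1 ha) b ((hφ b).1 hb) h

/-- Conjugation `a ↦ q⁻¹ * a * q` by a nonzero element of a division ring. -/
def invConj (K : Type*) [Field K] [Algebra K D] (q : D) (hq : q ≠ 0) : D ≃ₐ[K] D :=
  MulSemiringAction.toAlgEquiv K D (ConjAct.toConjAct (Units.mk0 q hq)⁻¹)

theorem invConj_apply (hq : q ≠ 0) : invConj K q hq a = q⁻¹ * a * q := by
  simp [invConj, ConjAct.units_smul_def]

theorem IsNormalEigen.invConj_mem_iff (hq : IsNormalEigen act A q) :
    invConj K q hq.ne_zero a ∈ A ↔ a ∈ A := by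
  rw [invConj_apply]
  refine ⟨fun h => ?_, hq.inv_mul_mul_mem a⟩
  simpa only [mul_assoc, mul_inv_cancel_left₀ hq.ne_zero, mul_inv_cancel₀ hq.ne_zero, mul_one]
    using hq.mul_mul_inv_mem _ h

theorem IsHomogPrime.map_invConj (hp : IsHomogPrime act A p) (hq : IsNormalEigen act A q) :
    IsHomogPrime act A (invConj K q hq.ne_zero p) := by
  obtain ⟨f, hf⟩ := hp.exists_isEigenWith
  obtain ⟨f', hf'⟩ := hq.exists_isEigenWith
  refine hp.map _ (fun a => hq.invConj_mem_iff) ⟨-f' + f + f', ?_⟩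
  rw [invConj_apply]
  exact (hf'.inv.mul hf).mul hf'

theorem exists_list_prod_eq_mul_prod (hl : ∀ p ∈ l, IsHomogPrime act A p) (hq : q ∈ l) :
    ∃ l' : List D, (∀ p ∈ l', IsHomogPrime act A p) ∧ l'.length < l.length ∧
      l.prod = q * l'.prod := by
  obtain ⟨l₁, l₂, rfl⟩ := List.append_of_mem hq
  have hq' := (hl q hq).toIsNormalEigen
  refine ⟨l₁.map (invConj K q hq'.ne_zero) ++ l₂, fun p hp => ?_, by simp, ?_⟩
  · rcases List.mem_append.1 hp with hp | hp
    · obtain ⟨p, hp₁, rfl⟩ := List.mem_map.1 hp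
      exact (hl p (by simp [hp₁])).map_invConj hq'
    · exact hl p (by simp [hp])
  · rw [List.prod_append, List.prod_append, List.prod_cons, ← map_list_prod, invConj_apply]
    simp only [mul_assoc, mul_inv_cancel_left₀ hq'.ne_zero]

theorem inv_prod_mul_mem_of_forall_inv_mul_notMem (hl : ∀ p ∈ l, IsHomogPrime act A p)
    (hc : c ∈ A) (hlc : ∀ p ∈ l, p⁻¹ * c ∉ A) (hv : v ∈ A) (h : l.prod⁻¹ * (v * c) ∈ A) :
    l.prod⁻¹ * v ∈ A := by
  induction l generalizing v with
  | nil => simpa using hv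
  | cons p l ih =>
    obtain ⟨hp, hl⟩ := List.forall_mem_cons.1 hl
    obtain ⟨hpc, hlc⟩ := List.forall_mem_cons.1 hlc
    have hL := IsNormalEigen.list_prod hl
    rw [List.prod_cons, mul_inv_rev, mul_assoc] at h ⊢
    have hdvd : p⁻¹ * (v * c) ∈ A := by
      simpa only [mul_inv_cancel_left₀ hL.ne_zero] using A.mul_mem hL.mem h
    exact ih hl hlc ((hp.mem_or_mem v hv c hc hdvd).resolve_right hpc) (by rwa [mul_assoc])

/-- A two-sided ideal of the subalgebra `A`, viewed as a subspace of the ambient ring, which is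
stable under the torus. -/
structure IsHIdeal (act : Torus K r →* (D ≃ₐ[K] D)) (A : Subalgebra K D) (I : Submodule K D) :
    Prop where
  le : I ≤ A.toSubmodule
  mul_mem_left : ∀ a ∈ A, ∀ b ∈ I, a * b ∈ I
  mul_mem_right : ∀ a ∈ A, ∀ b ∈ I, b * a ∈ I
  act_mem : ∀ ξ, ∀ b ∈ I, act ξ b ∈ I

/-- The form of the `H`-UFD property which is propagated along Ore extensions: every nonzero
`H`-ideal contains a product of homogeneous primes. -/
def IsHUFD (act : Torus K r →* (D ≃ₐ[K] D)) (A : Subalgebra K D) : Prop :=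
  ∀ I : Submodule K D, IsHIdeal act A I → I ≠ ⊥ →
    ∃ l : List D, (∀ p ∈ l, IsHomogPrime act A p) ∧ l.prod ∈ I

theorem IsHUFD.bot : IsHUFD act (⊥ : Subalgebra K D) := by
  intro I hI hI0
  obtain ⟨b, hb, hb0⟩ := Submodule.exists_mem_ne_zero_of_ne_bot hI0
  obtain ⟨c, rfl⟩ := Algebra.mem_bot.1 (hI.le hb)
  have hc : c ≠ 0 := by
    rintro rfl
    simp at hb0
  refine ⟨[], by simp, ?_⟩
  simpa [Algebra.algebraMap_eq_smul_one, smul_smul, hc] using I.smul_mem c⁻¹ hb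

end HomogeneousPrimes

section CauchonDatum

variable {K : Type u} [Field K] {D : Type v} [DivisionRing D] [Algebra K D] {r : ℕ}
  {act : Torus K r →* (D ≃ₐ[K] D)} {A B : Subalgebra K D} {S : Set D} {a g p t u x : D}
  {l : List D} {h : Torus K r} {fx fu : Fin r → ℤ}

/-- An eigenvector `g` of the same weight as `x` which makes the skew derivation of `x` on `A`
inner: `x - g` skew commutes with `A`, and with `g`. -/
structure IsCauchonElement (act : Torus K r →* (D ≃ₐ[K] D)) (A : Subalgebra K D) (x : D)
    (h : Torus K r) (fx : Fin r → ℤ) (g : D) : Prop where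
  isEigenWith : IsEigenWith K act fx g
  sub_mul : ∀ t ∈ A, (x - g) * t = act h t * (x - g)
  sub_mul_self : (x - g) * g = chi fx h • (g * (x - g))

theorem IsCauchonElement.skewDer_eq (G : IsCauchonElement act A x h fx g) (ht : t ∈ A) :
    skewDer x (act h) t = g * t - act h t * g := by
  have := G.sub_mul t ht
  rwa [_root_.sub_mul, mul_sub, sub_eq_sub_iff_sub_eq_sub] at this

/-- The left ideal of the elements of `A` which are denominators of `g`. -/
def denominators (A : Subalgebra K D) (g : D) : Submodule K D :=
  A.toSubmodule ⊓ A.toSubmodule.comap (LinearMap.mulRight K g)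

theorem mem_denominators : a ∈ denominators A g ↔ a ∈ A ∧ a * g ∈ A := Iff.rfl

theorem IsCauchonElement.isHIdeal_denominators (G : IsCauchonElement act A x h fx g)
    (C : IsCGLStep act A B x h fx) : IsHIdeal act A (denominators A g) where
  le := inf_le_left
  mul_mem_left a ha b hb := ⟨A.mul_mem ha hb.1,
    show a * b * g ∈ A from mul_assoc a b g ▸ A.mul_mem ha hb.2⟩
  mul_mem_right a ha b hb := by
    obtain ⟨a, rfl⟩ := (act h).surjective a
    have ha' : a ∈ A := by simpa using C.isOreExtension.symm_mem _ ha
    refine ⟨A.mul_mem hb.1 ha, show b * act h a * g ∈ A from ?_⟩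
    have key : b * act h a * g = b * g * a - b * skewDer x (act h) a := by
      rw [G.skewDer_eq ha', mul_sub, mul_assoc, mul_assoc, sub_sub_cancel]
    rw [key]
    exact A.sub_mem (A.mul_mem hb.2 ha') (A.mul_mem hb.1 (C.isOreExtension.skewDer_mem a ha'))
  act_mem ξ b hb := by
    refine ⟨C.act_mem ξ b hb.1, show act ξ b * g ∈ A from ?_⟩
    have key : act ξ b * g = ((chi fx ξ)⁻¹ : Kˣ) • act ξ (b * g) := by
      rw [map_mul, G.isEigenWith.act_eq, mul_smul_comm, inv_smul_smul]
    rw [key]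
    exact A.smul_mem (C.act_mem ξ _ hb.2) _

/-- A product of homogeneous primes of `A` which is a denominator of `g` in lowest terms. -/
structure IsReducedDenominator (act : Torus K r →* (D ≃ₐ[K] D)) (A : Subalgebra K D) (g : D)
    (l : List D) : Prop where
  isHomogPrime : ∀ p ∈ l, IsHomogPrime act A p
  prod_mul_mem : l.prod * g ∈ A
  inv_mul_notMem : ∀ p ∈ l, p⁻¹ * (l.prod * g) ∉ A

theorem IsCauchonElement.exists_isReducedDenominator (G : IsCauchonElement act A x h fx g)
    (C : IsCGLStep act A B x h fx) (hA : IsHUFD act A) (hg : ∃ a ∈ A, a ≠ 0 ∧ a * g ∈ A) :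
    ∃ l, IsReducedDenominator act A g l := by
  obtain ⟨a, ha, ha0, hag⟩ := hg
  have hne : denominators A g ≠ ⊥ :=
    (Submodule.ne_bot_iff _).2 ⟨a, mem_denominators.2 ⟨ha, hag⟩, ha0⟩
  obtain ⟨l, ⟨hl, hlg⟩, hmin⟩ := WellFounded.has_min (measure List.length).wf
    {l : List D | (∀ p ∈ l, IsHomogPrime act A p) ∧ l.prod ∈ denominators A g}
    (hA _ (G.isHIdeal_denominators C) hne)
  refine ⟨l, hl, hlg.2, fun p hp hdvd => ?_⟩
  obtain ⟨l', hl', hlen, hprod⟩ := exists_list_prod_eq_mul_prod hl hp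
  rw [hprod, mul_assoc, inv_mul_cancel_left₀ (hl p hp).ne_zero] at hdvd
  exact hmin l' ⟨hl', (IsNormalEigen.list_prod hl').mem, hdvd⟩ hlen

theorem IsReducedDenominator.skewDer_prod_mul_eq_zero (L : IsReducedDenominator act A g l)
    (G : IsCauchonElement act A x h fx g) (C : IsCGLStep act A B x h fx) :
    skewDer x (act h) (l.prod * g) = 0 := by
  have hN := IsNormalEigen.list_prod L.isHomogPrime
  obtain ⟨fu, hfu⟩ := hN.exists_isEigenWith
  set u := l.prod
  set c := u * g with hc
  let q := chi fu h * chi fx h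
  have hcA : c ∈ A := L.prod_mul_mem
  have hw : c - q • (u * c * u⁻¹) ∈ A :=
    A.sub_mem hcA (A.smul_mem (hN.mul_mul_inv_mem c hcA) (q : K))
  have key : skewDer x (act h) c = u⁻¹ * ((c - q • (u * c * u⁻¹)) * c) := by
    have hσc : act h c = q • c := by
      rw [hc, map_mul, hfu.act_eq, G.isEigenWith.act_eq, smul_mul_smul_comm]
    rw [G.skewDer_eq hcA, hσc, sub_mul, mul_sub, smul_mul_assoc, smul_mul_assoc, mul_smul_comm]
    simp only [hc, mul_assoc, inv_mul_cancel_left₀ hN.ne_zero]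
  have hwA : u⁻¹ * (c - q • (u * c * u⁻¹)) ∈ A :=
    inv_prod_mul_mem_of_forall_inv_mul_notMem L.isHomogPrime hcA L.inv_mul_notMem hw
      (key ▸ C.isOreExtension.skewDer_mem c hcA)
  exact skewDer_eq_zero_of_eq_mul (C.isEigenWith_gen.act_eq h) C.chi_pow_ne_one
    (C.locally_nilpotent c hcA) (C.locally_nilpotent _ hwA)
    (Or.inl (key.trans (mul_assoc _ _ _).symm))

theorem IsReducedDenominator.mul_prod_eq (L : IsReducedDenominator act A g l)
    (G : IsCauchonElement act A x h fx g) (C : IsCGLStep act A B x h fx)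
    (hfu : IsEigenWith K act fu l.prod) :
    g * l.prod = (chi fx h * chi fu h) • (l.prod * g) := by
  rcases eq_or_ne g 0 with rfl | hg0
  · simp
  · have hδ := L.skewDer_prod_mul_eq_zero G C
    rw [G.skewDer_eq L.prod_mul_mem, sub_eq_zero, map_mul, hfu.act_eq, G.isEigenWith.act_eq,
      smul_mul_smul_comm, mul_comm (chi fu h), ← mul_assoc] at hδ
    exact mul_right_cancel₀ hg0 hδ

/-- A Cauchon element `g` together with a normal denominator `u` in lowest terms. The product
`u * (x - g)` is the homogeneous prime added by the extension. -/
structure IsCauchonDatum (act : Torus K r →* (D ≃ₐ[K] D)) (A : Subalgebra K D) (x : D)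
    (h : Torus K r) (fx : Fin r → ℤ) (g u : D) (fu : Fin r → ℤ) : Prop
    extends IsCauchonElement act A x h fx g where
  isNormalEigen : IsNormalEigen act A u
  isEigenWith_denom : IsEigenWith K act fu u
  denom_mul_mem : u * g ∈ A
  mul_denom : g * u = (chi fx h * chi fu h) • (u * g)
  inv_mul_mem_of_mul : ∀ a ∈ A, u⁻¹ * (a * (u * g)) ∈ A → u⁻¹ * a ∈ A

theorem IsReducedDenominator.exists_isCauchonDatum (L : IsReducedDenominator act A g l)
    (G : IsCauchonElement act A x h fx g) (C : IsCGLStep act A B x h fx) :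
    ∃ fu, IsCauchonDatum act A x h fx g l.prod fu := by
  have hN := IsNormalEigen.list_prod L.isHomogPrime
  obtain ⟨fu, hfu⟩ := hN.exists_isEigenWith
  exact ⟨fu, G, hN, hfu, L.prod_mul_mem, L.mul_prod_eq G C hfu,
    fun _ ha => inv_prod_mul_mem_of_forall_inv_mul_notMem L.isHomogPrime L.prod_mul_mem
      L.inv_mul_notMem ha⟩

theorem IsQuantumTorusHull.exists_isCauchonDatum (T : IsQuantumTorusHull act A S)
    (C : IsCGLStep act A B x h fx) (hO : IsLeftOre A) (hA : IsHUFD act A) :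
    ∃ g ∈ quantumTorus K S, (∀ t ∈ quantumTorus K S, (x - g) * t = act h t * (x - g)) ∧
      ∃ u fu, IsCauchonDatum act A x h fx g u fu := by
  obtain ⟨g, hg, hgf, hcomm⟩ := T.exists_inner C
  have G : IsCauchonElement act A x h fx g :=
    ⟨hgf, fun t ht => hcomm t (T.le ht), by rw [hcomm g hg, hgf.act_eq, smul_mul_assoc]⟩
  obtain ⟨l, L⟩ := G.exists_isReducedDenominator C hA (T.quantumTorus_le_leftFractions hO hg)
  exact ⟨g, hg, hcomm, l.prod, L.exists_isCauchonDatum G C⟩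

end CauchonDatum

/-! ### Homogeneous primes in an Ore extension -/

section LiftedPrimes

namespace IsOreExtension

theorem induction_on {K : Type*} [CommRing K] {M : Type*} [Ring M] [Algebra K M]
    {A B : Subalgebra K M} {b x : M} {σ : M ≃ₐ[K] M} {P : M → Prop} (H : IsOreExtension A B x σ)
    (hb : b ∈ B) (mem : ∀ a ∈ A, P a) (add : ∀ a b, P a → P b → P (a + b))
    (mul_gen : ∀ b, P b → P (b * x)) : P b := by
  obtain ⟨n, a, ha, rfl⟩ := H.exists_mem_polyLT b hb
  have mul_gen_pow : ∀ a ∈ A, ∀ i : ℕ, P (a * x ^ i) := by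
    intro a ha i
    induction i with
    | zero => simpa using mem a ha
    | succ i ih => exact pow_succ x i ▸ mul_assoc a _ x ▸ mul_gen _ ih
  exact Finset.sum_induction _ P add (mem 0 A.zero_mem) fun i _ => mul_gen_pow _ (ha i) i

variable {K : Type*} [CommRing K] {D : Type*} [DivisionRing D] [Algebra K D]
  {A B : Subalgebra K D} {a b f p x : D} {σ : D ≃ₐ[K] D} {n : ℕ}

theorem mem_polyLT_of_mul_mem (H : IsOreExtension A B x σ) (hp : p ∈ A) (hp0 : p ≠ 0) (hb : b ∈ B)
    (h : p * b ∈ polyLT A x n) : b ∈ polyLT A x n := by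
  rcases eq_or_ne b 0 with rfl | hb0
  · exact Submodule.zero_mem _
  obtain ⟨m, f, hf, a, ha, ha0, rfl⟩ := H.exists_leading_term hb hb0
  rcases lt_or_ge m n with hmn | hnm
  · exact polyLT_mono hmn (mem_polyLT_succ.2 ⟨f, hf, a, ha, rfl⟩)
  · rw [mul_add, ← mul_assoc] at h
    exact absurd (H.eq_zero_of_add_mem_polyLT (mul_mem_polyLT hp hf) (A.mul_mem hp ha)
      (polyLT_mono hnm h)) (mul_ne_zero hp0 ha0)

theorem inv_mul_mem_of_inv_mul_add_mem (H : IsOreExtension A B x σ) (hp : p ∈ A) (hp0 : p ≠ 0)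
    (hf : f ∈ polyLT A x n) (ha : a ∈ A) (h : p⁻¹ * (f + a * x ^ n) ∈ B) : p⁻¹ * a ∈ A := by
  have hdeg : p⁻¹ * (f + a * x ^ n) ∈ polyLT A x (n + 1) :=
    H.mem_polyLT_of_mul_mem hp hp0 h <| by
      rw [mul_inv_cancel_left₀ hp0]
      exact mem_polyLT_succ.2 ⟨f, hf, a, ha, rfl⟩
  obtain ⟨f', hf', b, hb, hfb⟩ := mem_polyLT_succ.1 hdeg
  have hdiff : (p * f' - f) + (p * b - a) * x ^ n = 0 := by
    rw [inv_mul_eq_iff_eq_mul₀ hp0, mul_add, ← mul_assoc] at hfb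
    rw [sub_mul, sub_add_sub_comm, hfb, sub_self]
  have hab : p * b - a = 0 := H.eq_zero_of_add_mem_polyLT
    (Submodule.sub_mem _ (mul_mem_polyLT hp hf') hf) (A.sub_mem (A.mul_mem hp hb) ha)
    (hdiff ▸ Submodule.zero_mem _)
  rwa [← sub_eq_zero.1 hab, inv_mul_cancel_left₀ hp0]

theorem inv_notMem (H : IsOreExtension A B x σ) (hp : p ∈ A) (hp0 : p ≠ 0) (hpA : p⁻¹ ∉ A) :
    p⁻¹ ∉ B := fun hpB => hpA <| by
  simpa using H.inv_mul_mem_of_inv_mul_add_mem (n := 0) hp hp0 (Submodule.zero_mem _) A.one_mem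
    (by simpa using hpB)

theorem exists_eq_add_leading_term_of_inv_mul_notMem (H : IsOreExtension A B x σ) (hb : b ∈ B)
    (hpb : p⁻¹ * b ∉ B) :
    ∃ w ∈ B, p⁻¹ * w ∈ B ∧
      ∃ m, ∃ f ∈ polyLT A x m, ∃ a ∈ A, p⁻¹ * a ∉ A ∧ b = w + (f + a * x ^ m) := by
  obtain ⟨n, hn⟩ := H.exists_mem_polyLT b hb
  induction n generalizing b with
  | zero => simp [eq_zero_of_mem_polyLT_zero hn] at hpb
  | succ n ih =>
    obtain ⟨f, hf, a, ha, rfl⟩ := mem_polyLT_succ.1 hn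
    by_cases hpa : p⁻¹ * a ∈ A
    · have hx := B.pow_mem H.gen_mem n
      have hpax : p⁻¹ * (a * x ^ n) ∈ B := mul_assoc p⁻¹ a _ ▸ B.mul_mem (H.le hpa) hx
      have hpf : p⁻¹ * f ∉ B := fun hpf => hpb (mul_add p⁻¹ f _ ▸ B.add_mem hpf hpax)
      obtain ⟨w, hw, hpw, m, f', hf', a', ha', hpa', rfl⟩ := ih (H.polyLT_le n hf) hpf hf
      exact ⟨w + a * x ^ n, B.add_mem hw (B.mul_mem (H.le ha) hx),
        mul_add p⁻¹ w _ ▸ B.add_mem hpw hpax, m, f', hf', a', ha', hpa', add_right_comm _ _ _⟩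
    · exact ⟨0, B.zero_mem, by simp, n, f, hf, a, ha, hpa, (zero_add _).symm⟩

end IsOreExtension

variable {K : Type u} [Field K] {D : Type v} [DivisionRing D] [Algebra K D] {r : ℕ}
  {act : Torus K r →* (D ≃ₐ[K] D)} {A B : Subalgebra K D} {a g p u x : D}
  {h ξ : Torus K r} {f fx fu : Fin r → ℤ}

theorem IsEigenWith.inv_mul_mem_of_inv_mul_act_mem (hp : IsEigenWith K act f p)
    (hA : ∀ ξ, ∀ a ∈ A, act ξ a ∈ A) (h : p⁻¹ * act ξ a ∈ A) : p⁻¹ * a ∈ A := by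
  have key : act ξ⁻¹ (p⁻¹ * act ξ a) = chi (-f) ξ⁻¹ • (p⁻¹ * a) := by
    rw [map_mul, hp.inv.act_eq, ← AlgEquiv.mul_apply, ← map_mul, inv_mul_cancel, map_one,
      AlgEquiv.one_apply, smul_mul_assoc]
  rw [← inv_smul_smul (chi (-f) ξ⁻¹) (p⁻¹ * a), ← key]
  exact A.smul_mem (hA _ _ h) (((chi (-f) ξ⁻¹)⁻¹ : Kˣ) : K)

theorem IsCauchonDatum.skewDer_eq_zero (E : IsCauchonDatum act A x h fx g u fu)
    (C : IsCGLStep act A B x h fx) (hp : IsHomogPrime act A p) (hpu : p⁻¹ * u ∉ A) :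
    skewDer x (act h) p = 0 := by
  obtain ⟨f, hf⟩ := hp.exists_isEigenWith
  have hN := E.isNormalEigen
  have hδ : skewDer x (act h) p ∈ A := C.isOreExtension.skewDer_mem p hp.mem
  have huδ : u * skewDer x (act h) p = u * g * p - chi f h • (u * p * u⁻¹ * (u * g)) := by
    rw [E.skewDer_eq hp.mem, hf.act_eq]
    simp only [mul_sub, mul_assoc, inv_mul_cancel_left₀ hN.ne_zero, smul_mul_assoc, mul_smul_comm]
  have hconj : p⁻¹ * (u * p * u⁻¹) ∈ A := by
    refine (hp.mem_or_mem _ (hN.mul_mul_inv_mem p hp.mem) u hN.mem ?_).resolve_right hpu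
    rw [inv_mul_cancel_right₀ hN.ne_zero, ← mul_assoc]
    exact hp.inv_mul_mul_mem u hN.mem
  have hdvd : p⁻¹ * (u * skewDer x (act h) p) ∈ A := by
    rw [huδ, mul_sub, mul_smul_comm, ← mul_assoc, ← mul_assoc p⁻¹ (u * p * u⁻¹)]
    exact A.sub_mem (hp.inv_mul_mul_mem _ E.denom_mul_mem)
      (A.smul_mem (A.mul_mem hconj E.denom_mul_mem) (chi f h : K))
  exact skewDer_eq_zero_of_eq_mul (C.isEigenWith_gen.act_eq h) C.chi_pow_ne_one
    (C.locally_nilpotent p hp.mem)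
    (C.locally_nilpotent _ ((hp.mem_or_mem u hN.mem _ hδ hdvd).resolve_left hpu))
    (Or.inr (mul_inv_cancel_left₀ hp.ne_zero _).symm)

theorem IsOreExtension.isNormalEigen {σ : D ≃ₐ[K] D} {q : Kˣ} (H : IsOreExtension A B x σ)
    (hp : p ∈ B) (hp0 : p ≠ 0) (hpf : ∃ f, IsEigenWith K act f p)
    (hA : ∀ a ∈ A, p⁻¹ * a * p ∈ B) (hA' : ∀ a ∈ A, p * a * p⁻¹ ∈ B)
    (hxp : x * p = q • (p * x)) : IsNormalEigen act B p := by
  have hxp' : x * p⁻¹ = q⁻¹ • (p⁻¹ * x) := by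
    have : p * (x * p⁻¹) = q⁻¹ • x := by
      rw [eq_inv_smul_iff, ← mul_assoc, ← smul_mul_assoc, ← hxp, mul_inv_cancel_right₀ hp0]
    rw [← mul_smul_comm, ← this, inv_mul_cancel_left₀ hp0]
  refine ⟨hp, hp0,
    fun b hb => H.induction_on (P := fun b => p⁻¹ * b * p ∈ B) hb hA
      (fun a b ha hb => ?_) fun b hb => ?_,
    fun b hb => H.induction_on (P := fun b => p * b * p⁻¹ ∈ B) hb hA'
      (fun a b ha hb => ?_) fun b hb => ?_, hpf⟩
  · rw [mul_add, add_mul]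
    exact B.add_mem ha hb
  · have hbx : p⁻¹ * (b * x) * p = q • (p⁻¹ * b * p * x) := by
      simp only [mul_assoc, hxp, mul_smul_comm]
    exact hbx ▸ B.smul_mem (B.mul_mem hb H.gen_mem) (q : K)
  · rw [mul_add, add_mul]
    exact B.add_mem ha hb
  · have hbx : p * (b * x) * p⁻¹ = q⁻¹ • (p * b * p⁻¹ * x) := by
      simp only [mul_assoc, hxp', mul_smul_comm]
    exact hbx ▸ B.smul_mem (B.mul_mem hb H.gen_mem) ((q⁻¹ : Kˣ) : K)

theorem IsNormalEigen.of_skewDer_eq_zero (hp : IsNormalEigen act A p)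
    (C : IsCGLStep act A B x h fx) (hδ : skewDer x (act h) p = 0) : IsNormalEigen act B p := by
  obtain ⟨f, hf⟩ := hp.exists_isEigenWith
  have H := C.isOreExtension
  refine H.isNormalEigen (q := chi f h) (H.le hp.mem) hp.ne_zero ⟨f, hf⟩
    (fun a ha => H.le (hp.inv_mul_mul_mem a ha)) (fun a ha => H.le (hp.mul_mul_inv_mem a ha)) ?_
  rwa [skewDer_apply, hf.act_eq, sub_eq_zero, smul_mul_assoc] at hδ

theorem IsHomogPrime.of_skewDer_eq_zero (hp : IsHomogPrime act A p) (C : IsCGLStep act A B x h fx)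
    (hδ : skewDer x (act h) p = 0) : IsHomogPrime act B p := by
  have H := C.isOreExtension
  have hN := hp.toIsNormalEigen.of_skewDer_eq_zero C hδ
  refine ⟨hN, H.inv_notMem hp.mem hp.ne_zero hp.inv_notMem, fun b hb c hc hbc => ?_⟩
  by_contra! hcon
  obtain ⟨w, -, hpw, n, f, hf, a, ha, hpa, rfl⟩ :=
    H.exists_eq_add_leading_term_of_inv_mul_notMem hb hcon.1
  obtain ⟨w', -, hpw', m, f', hf', a', ha', hpa', rfl⟩ :=
    H.exists_eq_add_leading_term_of_inv_mul_notMem hc hcon.2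
  have hfa : f + a * x ^ n ∈ B := H.polyLT_le _ (mem_polyLT_succ.2 ⟨f, hf, a, ha, rfl⟩)
  have hlead : p⁻¹ * ((f + a * x ^ n) * (f' + a' * x ^ m)) ∈ B := by
    have expand : p⁻¹ * ((f + a * x ^ n) * (f' + a' * x ^ m)) =
        p⁻¹ * ((w + (f + a * x ^ n)) * (w' + (f' + a' * x ^ m))) -
          p⁻¹ * w * (w' + (f' + a' * x ^ m)) -
          p⁻¹ * (f + a * x ^ n) * p * (p⁻¹ * w') := by
      rw [mul_assoc _ p, mul_inv_cancel_left₀ hp.ne_zero]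
      noncomm_ring
    rw [expand]
    exact B.sub_mem (B.sub_mem hbc (B.mul_mem hpw hc))
      (B.mul_mem (hN.inv_mul_mul_mem _ hfa) hpw')
  have hσa' : act (h ^ n) a' ∈ A := C.act_mem _ a' ha'
  have hcoeff : p⁻¹ * (a * act (h ^ n) a') ∈ A := by
    refine H.inv_mul_mem_of_inv_mul_add_mem hp.mem hp.ne_zero
      (H.leading_term_mul ha ha' hf hf') (A.mul_mem ha hσa') ?_
    rwa [map_pow, sub_add_cancel]
  obtain ⟨fp, hfp⟩ := hp.exists_isEigenWith
  exact (hp.mem_or_mem a ha _ hσa' hcoeff).elim hpa fun h =>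
    hpa' (hfp.inv_mul_mem_of_inv_mul_act_mem C.act_mem h)

end LiftedPrimes

/-! ### The new homogeneous prime -/

section QuasiCommute

variable {S M : Type*} [Monoid S] [Monoid M] [MulAction S M] [IsScalarTower S M M]
  [SMulCommClass S M M] {a b : M} {q : S}

theorem mul_pow_of_mul_eq_smul (h : a * b = q • (b * a)) (n : ℕ) :
    a * b ^ n = q ^ n • (b ^ n * a) := by
  have hsemi : SemiconjBy a b (q • b) := h.trans (smul_mul_assoc q b a).symm
  rw [(hsemi.pow_right n).eq, smul_pow, smul_mul_assoc]

theorem pow_mul_of_mul_eq_smul (h : a * b = q • (b * a)) (n : ℕ) :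
    a ^ n * b = q ^ n • (b * a ^ n) := by
  have hsemi : SemiconjBy b (q • a) a := (mul_smul_comm q b a).trans h.symm
  rw [← (hsemi.pow_right n).eq, smul_pow, mul_smul_comm]

end QuasiCommute

section CauchonPrime

variable {K : Type u} [Field K] {D : Type v} [DivisionRing D] [Algebra K D] {r : ℕ}
  {act : Torus K r →* (D ≃ₐ[K] D)} {A B : Subalgebra K D} {a b g q u x : D}
  {h : Torus K r} {fx fu : Fin r → ℤ} {n : ℕ}

theorem IsNormalEigen.pow (hu : IsNormalEigen act A u) (n : ℕ) : IsNormalEigen act A (u ^ n) := by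
  induction n with
  | zero => exact pow_zero u ▸ .one
  | succ n ih => exact pow_succ u n ▸ ih.mul hu

namespace IsCauchonDatum

theorem prime_mul (E : IsCauchonDatum act A x h fx g u fu) (ha : a ∈ A) :
    u * (x - g) * a = u * act h a * u⁻¹ * (u * (x - g)) := by
  simp only [mul_assoc, inv_mul_cancel_left₀ E.isNormalEigen.ne_zero, E.sub_mul a ha]

theorem sub_mul_denom (E : IsCauchonDatum act A x h fx g u fu) :
    (x - g) * u = chi fu h • (u * (x - g)) := by
  rw [E.sub_mul u E.isNormalEigen.mem, E.isEigenWith_denom.act_eq, smul_mul_assoc]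

theorem prime_mul_denom (E : IsCauchonDatum act A x h fx g u fu) :
    u * (x - g) * u = chi fu h • (u * (u * (x - g))) := by
  rw [mul_assoc, E.sub_mul_denom, mul_smul_comm]

theorem gen_mul_prime (E : IsCauchonDatum act A x h fx g u fu) :
    x * (u * (x - g)) = chi fu h • (u * (x - g) * x) := by
  have hxu : x * u = chi fu h • (u * (x - g)) + (chi fx h * chi fu h) • (u * g) := by
    rw [← E.sub_mul_denom, ← E.mul_denom, _root_.sub_mul, sub_add_cancel]
  have hxgx : (x - g) * x = (x - g) * (x - g) + chi fx h • (g * (x - g)) := by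
    rw [← E.sub_mul_self, ← mul_add, sub_add_cancel]
  rw [← mul_assoc, hxu, mul_assoc u _ x, hxgx]
  simp only [add_mul, mul_add, smul_add, smul_mul_assoc, mul_smul_comm, smul_smul, mul_assoc,
    mul_comm (chi fx h)]

theorem prime_ne_zero (E : IsCauchonDatum act A x h fx g u fu) (C : IsCGLStep act A B x h fx) :
    u * (x - g) ≠ 0 := fun hz =>
  C.mul_gen_ne E.isNormalEigen.mem E.isNormalEigen.ne_zero E.denom_mul_mem <|
    sub_eq_zero.1 ((mul_sub u x g).symm.trans hz)

theorem exists_mul_prime_eq (E : IsCauchonDatum act A x h fx g u fu)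
    (C : IsCGLStep act A B x h fx) (ha : a ∈ A) :
    ∃ b ∈ A, a * (u * (x - g)) = u * (x - g) * b := by
  have hu := E.isNormalEigen
  have hb := C.isOreExtension.symm_mem _ (hu.inv_mul_mul_mem a ha)
  refine ⟨_, hb, ?_⟩
  rw [E.prime_mul hb, AlgEquiv.apply_symm_apply, mul_assoc u⁻¹, mul_inv_cancel_left₀ hu.ne_zero,
    mul_inv_cancel_right₀ hu.ne_zero]

theorem isNormalEigen_prime (E : IsCauchonDatum act A x h fx g u fu)
    (C : IsCGLStep act A B x h fx) : IsNormalEigen act B (u * (x - g)) := by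
  have H := C.isOreExtension
  have hu := E.isNormalEigen
  have hz0 := E.prime_ne_zero C
  refine H.isNormalEigen ?_ hz0 ⟨_, E.isEigenWith_denom.mul (C.isEigenWith_gen.sub E.isEigenWith)⟩
    (fun a ha => ?_) (fun a ha => ?_) E.gen_mul_prime
  · rw [mul_sub]
    exact B.sub_mem (B.mul_mem (H.le hu.mem) H.gen_mem) (H.le E.denom_mul_mem)
  · obtain ⟨b, hb, hab⟩ := E.exists_mul_prime_eq C ha
    rw [mul_assoc, hab, inv_mul_cancel_left₀ hz0]
    exact H.le hb
  · rw [E.prime_mul ha, mul_inv_cancel_right₀ hz0]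
    exact H.le (hu.mul_mul_inv_mem _ (H.map_mem a ha))

theorem mul_prime_notMem (E : IsCauchonDatum act A x h fx g u fu)
    (C : IsCGLStep act A B x h fx) (hq : q ∈ B) (hq0 : q ≠ 0) : q * (u * (x - g)) ∉ A := by
  intro hqz
  have H := C.isOreExtension
  have hu := E.isNormalEigen
  obtain ⟨n, f, hf, a, ha, ha0, rfl⟩ := H.exists_leading_term hq hq0
  have hz : u * (x - g) = -(u * g) + u * x ^ 1 := by rw [pow_one, mul_sub, neg_add_eq_sub]
  have hug : -(u * g) ∈ polyLT A x 1 := by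
    simpa using mul_gen_pow_mem_polyLT (x := x) (n := 0) (A.neg_mem E.denom_mul_mem)
  have hlead := H.leading_term_mul ha hu.mem hf hug
  rw [← hz] at hlead
  have hqz' : (f + a * x ^ n) * (u * (x - g)) ∈ polyLT A x (n + 1) :=
    polyLT_mono (Nat.le_add_left 1 n) (by simpa using mul_gen_pow_mem_polyLT (x := x) (n := 0) hqz)
  have htop := Submodule.sub_mem _ hqz' hlead
  rw [sub_sub_cancel] at htop
  have hcoeff := H.eq_zero_of_mul_gen_pow_mem_polyLT (A.mul_mem ha (H.pow_map_mem n hu.mem)) htop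
  exact mul_ne_zero ha0 ((map_ne_zero (act h ^ n)).2 hu.ne_zero) hcoeff

theorem inv_mul_mul_prime_add_mem (E : IsCauchonDatum act A x h fx g u fu)
    (C : IsCGLStep act A B x h fx) (ha : a ∈ A) (n : ℕ) :
    u⁻¹ * (a * x ^ n * (u * (x - g)) + chi fu h ^ n • (a * (u * g)) * x ^ n) ∈ B := by
  have H := C.isOreExtension
  have key : u⁻¹ * (a * x ^ n * (u * (x - g)) + chi fu h ^ n • (a * (u * g)) * x ^ n) =
      chi fu h ^ n • (u⁻¹ * a * u * x ^ (n + 1)) := by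
    rw [mul_assoc a, pow_mul_of_mul_eq_smul E.gen_mul_prime, mul_smul_comm, smul_mul_assoc,
      ← smul_add, mul_smul_comm, pow_succ']
    congr 1
    noncomm_ring
  rw [key]
  exact B.smul_mem (B.mul_mem (H.le (E.isNormalEigen.inv_mul_mul_mem a ha))
    (B.pow_mem H.gen_mem _)) ((chi fu h ^ n : Kˣ) : K)

theorem exists_inv_mul_mul_prime_sub_mem (E : IsCauchonDatum act A x h fx g u fu)
    (C : IsCGLStep act A B x h fx) (hq : q ∈ polyLT A x n) :
    ∃ w ∈ polyLT A x n, u⁻¹ * (q * (u * (x - g)) - w) ∈ B := by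
  induction n generalizing q with
  | zero => exact ⟨0, Submodule.zero_mem _, by simp [eq_zero_of_mem_polyLT_zero hq]⟩
  | succ n ih =>
    obtain ⟨q, hq', a, ha, rfl⟩ := mem_polyLT_succ.1 hq
    obtain ⟨w, hw, hqw⟩ := ih hq'
    set t := chi fu h ^ n • (a * (u * g))
    have ht : t ∈ A := A.smul_mem (A.mul_mem ha E.denom_mul_mem) ((chi fu h ^ n : Kˣ) : K)
    refine ⟨w - t * x ^ n, Submodule.sub_mem _ (polyLT_mono n.le_succ hw)
      (mul_gen_pow_mem_polyLT ht), ?_⟩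
    have key : u⁻¹ * ((q + a * x ^ n) * (u * (x - g)) - (w - t * x ^ n)) =
        u⁻¹ * (q * (u * (x - g)) - w) + u⁻¹ * (a * x ^ n * (u * (x - g)) + t * x ^ n) := by
      noncomm_ring
    rw [key]
    exact B.add_mem hqw (E.inv_mul_mul_prime_add_mem C ha n)

theorem inv_mul_mem_of_inv_mul_mul_prime_mem (E : IsCauchonDatum act A x h fx g u fu)
    (C : IsCGLStep act A B x h fx) (hq : q ∈ B) (hqz : u⁻¹ * (q * (u * (x - g))) ∈ B) :
    u⁻¹ * q ∈ B := by
  by_contra hcon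
  have H := C.isOreExtension
  have hu := E.isNormalEigen
  obtain ⟨w₀, -, hw₀, m, f, hf, a, ha, hua, rfl⟩ :=
    H.exists_eq_add_leading_term_of_inv_mul_notMem hq hcon
  obtain ⟨w, hw, hfw⟩ := E.exists_inv_mul_mul_prime_sub_mem C hf
  have hax := E.inv_mul_mul_prime_add_mem C ha m
  set k := chi fu h ^ m
  have hlead : u⁻¹ * (w + -(k • (a * (u * g))) * x ^ m) ∈ B := by
    have key : u⁻¹ * (w + -(k • (a * (u * g))) * x ^ m) =
        u⁻¹ * ((w₀ + (f + a * x ^ m)) * (u * (x - g))) - u⁻¹ * w₀ * (u * (x - g)) -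
          u⁻¹ * (f * (u * (x - g)) - w) -
          u⁻¹ * (a * x ^ m * (u * (x - g)) + k • (a * (u * g)) * x ^ m) := by
      noncomm_ring
    rw [key]
    exact B.sub_mem (B.sub_mem (B.sub_mem hqz
      (B.mul_mem hw₀ (E.isNormalEigen_prime C).mem)) hfw) hax
  have hug : a * (u * g) ∈ A := A.mul_mem ha E.denom_mul_mem
  have hdvd := H.inv_mul_mem_of_inv_mul_add_mem hu.mem hu.ne_zero hw
    (A.neg_mem (A.smul_mem hug (k : K))) hlead
  rw [mul_neg, neg_mem_iff, mul_smul_comm] at hdvd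
  refine hua (E.inv_mul_mem_of_mul a ha ?_)
  simpa only [smul_smul, Units.inv_mul, one_smul] using A.smul_mem hdvd ((k⁻¹ : Kˣ) : K)

theorem mul_inv_prime_mem_of_pow_mul (E : IsCauchonDatum act A x h fx g u fu)
    (C : IsCGLStep act A B x h fx) (hb : b ∈ B) (hbz : u ^ n * b * (u * (x - g))⁻¹ ∈ B) :
    b * (u * (x - g))⁻¹ ∈ B := by
  have hu0 := E.isNormalEigen.ne_zero
  induction n generalizing b with
  | zero => simpa using hbz
  | succ n ih =>
    have hub := ih (B.mul_mem (C.isOreExtension.le E.isNormalEigen.mem) hb)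
      (by rwa [← mul_assoc, ← pow_succ])
    have := E.inv_mul_mem_of_inv_mul_mul_prime_mem C hub (by
      rwa [inv_mul_cancel_right₀ (E.prime_ne_zero C), inv_mul_cancel_left₀ hu0])
    rwa [mul_assoc u, inv_mul_cancel_left₀ hu0] at this

theorem denom_mul_mul_gen_mem_polyLT (E : IsCauchonDatum act A x h fx g u fu)
    (hb : b ∈ polyLT A (u * (x - g)) n) : u * (b * x) ∈ polyLT A (u * (x - g)) (n + 1) := by
  induction n generalizing b with
  | zero => simp [eq_zero_of_mem_polyLT_zero hb]
  | succ n ih =>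
    obtain ⟨f, hf, a, ha, rfl⟩ := mem_polyLT_succ.1 hb
    have hu := E.isNormalEigen
    have ha' := hu.mul_mul_inv_mem a ha
    have hux : u * x = u * (x - g) + u * g := by rw [← mul_add, sub_add_cancel]
    have key : u * (a * (u * (x - g)) ^ n * x) = (chi fu h ^ n)⁻¹ •
        (u * a * u⁻¹ * (u * g) * (u * (x - g)) ^ n +
          u * a * u⁻¹ * (u * (x - g)) ^ (n + 1)) := by
      rw [eq_inv_smul_iff, mul_assoc a, ← mul_smul_comm, ← mul_smul_comm,
        ← mul_pow_of_mul_eq_smul E.gen_mul_prime, pow_succ', add_comm, mul_assoc _ (u * g),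
        ← mul_add, ← add_mul, ← hux]
      simp only [mul_assoc, inv_mul_cancel_left₀ hu.ne_zero]
    rw [add_mul, mul_add, key]
    exact Submodule.add_mem _ (polyLT_mono (Nat.le_succ _) (ih hf)) <|
      Submodule.smul_mem _ (((chi fu h ^ n)⁻¹ : Kˣ) : K) <| Submodule.add_mem _
        (polyLT_mono (Nat.le_succ _) (mul_gen_pow_mem_polyLT (A.mul_mem ha' E.denom_mul_mem)))
        (mul_gen_pow_mem_polyLT ha')

theorem exists_pow_mul_mem_polyLT (E : IsCauchonDatum act A x h fx g u fu)
    (C : IsCGLStep act A B x h fx) (hb : b ∈ B) :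
    ∃ e n, u ^ e * b ∈ polyLT A (u * (x - g)) n := by
  have hu := E.isNormalEigen
  refine C.isOreExtension.induction_on (P := fun b => ∃ e n, u ^ e * b ∈ polyLT A (u * (x - g)) n)
    hb (fun a ha => ⟨0, 1, ?_⟩) ?_ ?_
  · simpa using mul_gen_pow_mem_polyLT (x := u * (x - g)) (n := 0) ha
  · rintro b b' ⟨e, n, hb⟩ ⟨e', n', hb'⟩
    have key : u ^ (e + e') * (b + b') = u ^ e' * (u ^ e * b) + u ^ e * (u ^ e' * b') := by
      rw [mul_add, ← mul_assoc, ← mul_assoc, ← pow_add, ← pow_add, add_comm e']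
    refine ⟨e + e', n + n', key ▸ Submodule.add_mem _ ?_ ?_⟩
    · exact polyLT_mono (Nat.le_add_right n n') (mul_mem_polyLT (A.pow_mem hu.mem _) hb)
    · exact polyLT_mono (Nat.le_add_left n' n) (mul_mem_polyLT (A.pow_mem hu.mem _) hb')
  · rintro b ⟨e, n, hb⟩
    refine ⟨e + 1, n + 1, ?_⟩
    simpa only [pow_succ', mul_assoc] using E.denom_mul_mul_gen_mem_polyLT hb

theorem exists_pow_mul_eq_add_mul_prime (E : IsCauchonDatum act A x h fx g u fu)
    (C : IsCGLStep act A B x h fx) (hb : b ∈ B) :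
    ∃ e : ℕ, ∃ a ∈ A, ∃ q ∈ B, u ^ e * b = a + q * (u * (x - g)) := by
  have hz := (E.isNormalEigen_prime C).mem
  obtain ⟨e, n, a, ha, hsum⟩ := E.exists_pow_mul_mem_polyLT C hb
  cases n with
  | zero => exact ⟨e, 0, A.zero_mem, 0, B.zero_mem, by simpa using hsum⟩
  | succ n =>
    refine ⟨e, a 0, ha 0, ∑ i ∈ Finset.range n, a (i + 1) * (u * (x - g)) ^ i,
      B.sum_mem fun i _ => B.mul_mem (C.isOreExtension.le (ha _)) (B.pow_mem hz i), ?_⟩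
    rw [hsum, Finset.sum_range_succ', Finset.sum_mul, pow_zero, mul_one, add_comm]
    simp only [pow_succ, mul_assoc]

theorem eq_zero_or_eq_zero_of_mul_mul_inv_prime_mem (E : IsCauchonDatum act A x h fx g u fu)
    (C : IsCGLStep act A B x h fx) {b' : D} {e : ℕ} (ha : a ∈ A) (hb' : b' ∈ A)
    (hq : q ∈ B) (hred : u ^ e * b = b' + q * (u * (x - g)))
    (habz : a * b * (u * (x - g))⁻¹ ∈ B) : a = 0 ∨ b' = 0 := by
  have H := C.isOreExtension
  have hv := E.isNormalEigen.pow e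
  have hz0 := E.prime_ne_zero C
  set z := u * (x - g)
  set v := u ^ e
  have hconj := hv.mul_mul_inv_mem a ha
  have hmem : v * a * v⁻¹ * b' * z⁻¹ ∈ B := by
    have key : v * a * v⁻¹ * b' * z⁻¹ = v * (a * b * z⁻¹) - v * a * v⁻¹ * q := by
      rw [eq_sub_of_add_eq hred.symm]
      simp only [mul_sub, sub_mul, mul_assoc, mul_inv_cancel₀ hz0, mul_one,
        inv_mul_cancel_left₀ hv.ne_zero]
    rw [key]
    exact B.sub_mem (B.mul_mem (H.le hv.mem) habz) (B.mul_mem (H.le hconj) hq)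
  have hzero : v * a * v⁻¹ * b' = 0 := by
    by_contra hne
    refine E.mul_prime_notMem C hmem (mul_ne_zero hne (inv_ne_zero hz0)) ?_
    rw [inv_mul_cancel_right₀ hz0]
    exact A.mul_mem hconj hb'
  simpa [hv.ne_zero] using hzero

theorem isHomogPrime_prime (E : IsCauchonDatum act A x h fx g u fu)
    (C : IsCGLStep act A B x h fx) : IsHomogPrime act B (u * (x - g)) := by
  have H := C.isOreExtension
  have hz := E.isNormalEigen_prime C
  refine ⟨hz, fun hzB => ?_, fun b hb c hc hbc => ?_⟩
  · refine E.mul_prime_notMem C hzB (inv_ne_zero hz.ne_zero) ?_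
    rw [inv_mul_cancel₀ hz.ne_zero]
    exact A.one_mem
  · rw [hz.inv_mul_mem_iff] at hbc ⊢
    rw [hz.inv_mul_mem_iff]
    obtain ⟨e, a, ha, q, hq, hred⟩ := E.exists_pow_mul_eq_add_mul_prime C hb
    obtain ⟨e', a', ha', q', hq', hred'⟩ := E.exists_pow_mul_eq_add_mul_prime C hc
    have hac : a * c * (u * (x - g))⁻¹ ∈ B := by
      have key : a * c * (u * (x - g))⁻¹ = u ^ e * (b * c * (u * (x - g))⁻¹) -
          q * (u * (x - g) * c * (u * (x - g))⁻¹) := by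
        rw [eq_sub_of_add_eq hred.symm]
        noncomm_ring
      rw [key]
      exact B.sub_mem (B.mul_mem (B.pow_mem (H.le E.isNormalEigen.mem) _) hbc)
        (B.mul_mem hq (hz.mul_mul_inv_mem c hc))
    refine (E.eq_zero_or_eq_zero_of_mul_mul_inv_prime_mem C ha ha' hq' hred' hac).imp ?_ ?_
    · rintro rfl
      refine E.mul_inv_prime_mem_of_pow_mul C (n := e) hb ?_
      rwa [hred, zero_add, mul_inv_cancel_right₀ hz.ne_zero]
    · rintro rfl
      refine E.mul_inv_prime_mem_of_pow_mul C (n := e') hc ?_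
      rwa [hred', zero_add, mul_inv_cancel_right₀ hz.ne_zero]

end IsCauchonDatum

end CauchonPrime

/-! ### Unique factorization along an Ore extension -/

section CauchonStep

variable {K : Type u} [Field K] {D : Type v} [DivisionRing D] [Algebra K D] {r : ℕ}
  {act : Torus K r →* (D ≃ₐ[K] D)} {A B : Subalgebra K D} {I : Submodule K D}
  {b g p u x : D} {h : Torus K r} {fx fu : Fin r → ℤ} {l : List D}

/-- The right ideal quotient `{b ∈ B | p * b ∈ I}`. -/
def leftColon (B : Subalgebra K D) (I : Submodule K D) (p : D) : Submodule K D :=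
  B.toSubmodule ⊓ I.comap (LinearMap.mulLeft K p)

theorem mem_leftColon : b ∈ leftColon B I p ↔ b ∈ B ∧ p * b ∈ I := Iff.rfl

namespace IsHIdeal

theorem leftColon (hI : IsHIdeal act B I) (hB : ∀ ξ, ∀ b ∈ B, act ξ b ∈ B)
    (hp : IsNormalEigen act B p) : IsHIdeal act B (leftColon B I p) where
  le := inf_le_left
  mul_mem_left a ha b hb := by
    refine mem_leftColon.2 ⟨B.mul_mem ha hb.1, ?_⟩
    simpa only [mul_assoc, inv_mul_cancel_left₀ hp.ne_zero] using
      hI.mul_mem_left _ (hp.mul_mul_inv_mem a ha) _ (mem_leftColon.1 hb).2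
  mul_mem_right a ha b hb := by
    refine mem_leftColon.2 ⟨B.mul_mem hb.1 ha, ?_⟩
    simpa only [mul_assoc] using hI.mul_mem_right a ha _ (mem_leftColon.1 hb).2
  act_mem ξ b hb := by
    obtain ⟨f, hf⟩ := hp.exists_isEigenWith
    have key : p * act ξ b = (chi f ξ)⁻¹ • act ξ (p * b) := by
      rw [map_mul, hf.act_eq, smul_mul_assoc, inv_smul_smul]
    refine mem_leftColon.2 ⟨hB ξ b hb.1, ?_⟩
    rw [key]
    exact I.smul_mem (((chi f ξ)⁻¹ : Kˣ) : K) (hI.act_mem ξ _ (mem_leftColon.1 hb).2)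

theorem inf (hI : IsHIdeal act B I) (hAB : A ≤ B) (hA : ∀ ξ, ∀ a ∈ A, act ξ a ∈ A) :
    IsHIdeal act A (A.toSubmodule ⊓ I) where
  le := inf_le_left
  mul_mem_left a ha b hb := ⟨A.mul_mem ha hb.1, hI.mul_mem_left a (hAB ha) b hb.2⟩
  mul_mem_right a ha b hb := ⟨A.mul_mem hb.1 ha, hI.mul_mem_right a (hAB ha) b hb.2⟩
  act_mem ξ b hb := ⟨hA ξ b hb.1, hI.act_mem ξ b hb.2⟩

end IsHIdeal

theorem IsCGLStep.chi_pow_injective (C : IsCGLStep act A B x h fx) :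
    Function.Injective fun n : ℕ => (chi fx h : K) ^ n := by
  have hinj : Function.Injective fun n : ℕ => chi fx h ^ n := by
    rw [injective_pow_iff_not_isOfFinOrder, isOfFinOrder_iff_pow_eq_one]
    rintro ⟨n, hn, h1⟩
    exact C.chi_pow_ne_one n hn.ne' h1
  exact fun m n hmn => hinj (Units.ext (by simpa using hmn))

namespace IsCauchonDatum

theorem act_prime (E : IsCauchonDatum act A x h fx g u fu) (C : IsCGLStep act A B x h fx) :
    act h (u * (x - g)) = (chi fu h * chi fx h) • (u * (x - g)) := by
  rw [map_mul, E.isEigenWith_denom.act_eq, (C.isEigenWith_gen.sub E.isEigenWith).act_eq,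
    smul_mul_smul_comm]

theorem smul_prime_mul_sub (E : IsCauchonDatum act A x h fx g u fu)
    (C : IsCGLStep act A B x h fx) (hb : b ∈ A) (c : K) (n : ℕ) :
    c • (u * (x - g) * (b * (u * (x - g)) ^ n) * u) -
        chi fu h • (u * act h (b * (u * (x - g)) ^ n) * (u * (x - g))) =
      ((c - (chi fx h : K) ^ n) • chi fu h ^ (n + 1) • (u * act h b)) *
        (u * (x - g)) ^ (n + 1) := by
  have hleft : u * (x - g) * (b * (u * (x - g)) ^ n) * u =
      chi fu h ^ (n + 1) • (u * act h b * (u * (x - g)) ^ (n + 1)) := by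
    rw [← mul_assoc, E.prime_mul hb, mul_assoc _ (u * (x - g)), ← pow_succ', mul_assoc,
      pow_mul_of_mul_eq_smul E.prime_mul_denom, mul_smul_comm]
    simp only [mul_assoc, inv_mul_cancel_left₀ E.isNormalEigen.ne_zero]
  have hright : u * act h (b * (u * (x - g)) ^ n) * (u * (x - g)) =
      (chi fu h * chi fx h) ^ n • (u * act h b * (u * (x - g)) ^ (n + 1)) := by
    rw [map_mul, map_pow, E.act_prime C, smul_pow, mul_smul_comm, mul_smul_comm, smul_mul_assoc,
      pow_succ]
    simp only [mul_assoc]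
  rw [hleft, hright]
  simp only [Units.smul_def, smul_mul_assoc, smul_smul, ← sub_smul, Units.val_mul,
    Units.val_pow_eq_pow_val]
  congr 1
  ring

theorem exists_mul_prime_pow_mem_of_sum_mem (E : IsCauchonDatum act A x h fx g u fu)
    (C : IsCGLStep act A B x h fx) (hI : IsHIdeal act B I) {s : Finset ℕ} (hs : s.Nonempty)
    {a : ℕ → D} (ha : ∀ i ∈ s, a i ∈ A ∧ a i ≠ 0) {k : ℕ}
    (hsum : ∑ i ∈ s, a i * (u * (x - g)) ^ (i + k) ∈ I) :
    ∃ b ∈ A, b ≠ 0 ∧ ∃ m : ℕ, b * (u * (x - g)) ^ m ∈ I := by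
  have H := C.isOreExtension
  have hu := E.isNormalEigen
  have hz := (E.isNormalEigen_prime C).mem
  induction s using Finset.induction_on generalizing a k with
  | empty => simp at hs
  | insert N s hN ih =>
    obtain ⟨haN, ha⟩ := (Finset.forall_mem_insert _ _ _).1 ha
    rcases s.eq_empty_or_nonempty with rfl | hs
    · exact ⟨a N, haN.1, haN.2, N + k, by simpa using hsum⟩
    let c : ℕ → K := fun i => (chi fx h : K) ^ (N + k) - (chi fx h : K) ^ (i + k)
    refine ih (a := fun i => c i • chi fu h ^ (i + k + 1) • (u * act h (a i))) (k := k + 1) hs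
      (fun i hi => ⟨?_, ?_⟩) ?_
    · exact A.smul_mem (A.smul_mem (A.mul_mem hu.mem (H.map_mem _ (ha i hi).1))
        ((chi fu h ^ (i + k + 1) : Kˣ) : K)) _
    · refine smul_ne_zero (sub_ne_zero.2 fun hc => hN ?_) ((smul_ne_zero_iff_ne _).2
        (mul_ne_zero hu.ne_zero ((map_ne_zero _).2 (ha i hi).2)))
      rwa [Nat.add_right_cancel (C.chi_pow_injective hc)]
    · have hΦ := I.sub_mem
        (I.smul_mem ((chi fx h : K) ^ (N + k))
          (hI.mul_mem_right u (H.le hu.mem) _ (hI.mul_mem_left _ hz _ hsum)))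
        (I.smul_mem (chi fu h : K)
          (hI.mul_mem_right _ hz _ (hI.mul_mem_left u (H.le hu.mem) _ (hI.act_mem h _ hsum))))
      rw [← Units.smul_def] at hΦ
      simp only [Finset.mul_sum, Finset.sum_mul, Finset.smul_sum, map_sum,
        ← Finset.sum_sub_distrib] at hΦ
      rw [Finset.sum_insert hN, E.smul_prime_mul_sub C haN.1, sub_self, zero_smul, zero_mul,
        zero_add, Finset.sum_congr rfl fun i hi => E.smul_prime_mul_sub C (ha i hi).1 _ _] at hΦ
      exact hΦ

theorem exists_mul_prime_pow_mem (E : IsCauchonDatum act A x h fx g u fu)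
    (C : IsCGLStep act A B x h fx) (hI : IsHIdeal act B I) (hI0 : I ≠ ⊥) :
    ∃ a ∈ A, a ≠ 0 ∧ ∃ m : ℕ, a * (u * (x - g)) ^ m ∈ I := by
  classical
  obtain ⟨b, hb, hb0⟩ := I.ne_bot_iff.1 hI0
  have hu := E.isNormalEigen
  obtain ⟨e, n, a, ha, hsum⟩ := E.exists_pow_mul_mem_polyLT C (hI.le hb)
  have hne : u ^ e * b ≠ 0 := mul_ne_zero (pow_ne_zero _ hu.ne_zero) hb0
  have hmem : u ^ e * b ∈ I :=
    hI.mul_mem_left _ (C.isOreExtension.le (A.pow_mem hu.mem e)) b hb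
  let s := (Finset.range n).filter fun i => a i ≠ 0
  have hfilter : ∑ i ∈ s, a i * (u * (x - g)) ^ (i + 0) = u ^ e * b := by
    rw [hsum]
    exact Finset.sum_filter_of_ne fun i _ h => left_ne_zero_of_mul h
  refine E.exists_mul_prime_pow_mem_of_sum_mem C hI (s := s) (a := a) (k := 0)
    (Finset.nonempty_of_sum_ne_zero (hfilter ▸ hne))
    (fun i hi => ⟨ha i, (Finset.mem_filter.1 hi).2⟩) (hfilter ▸ hmem)

theorem exists_mul_prime_pow_eq (E : IsCauchonDatum act A x h fx g u fu)
    (C : IsCGLStep act A B x h fx) (hb : b ∈ A) (n : ℕ) :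
    ∃ a ∈ A, b * (u * (x - g)) ^ n = (u * (x - g)) ^ n * a := by
  induction n with
  | zero => exact ⟨b, hb, by simp⟩
  | succ n ih =>
    obtain ⟨a, ha, hba⟩ := ih
    obtain ⟨a', ha', haa'⟩ := E.exists_mul_prime_eq C ha
    exact ⟨a', ha', by rw [pow_succ, ← mul_assoc, hba, mul_assoc, haa', ← mul_assoc]⟩

theorem denom_pow_mul_prime_pow_mul_gen (E : IsCauchonDatum act A x h fx g u fu) (e j : ℕ) :
    chi fu h ^ j • (u ^ (e + 1) * (u * (x - g)) ^ j * x) =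
      u ^ e * (u * (x - g)) ^ (j + 1) + u ^ (e + 1) * g * (u * (x - g)) ^ j := by
  have hux : u ^ (e + 1) * x = u ^ e * (u * (x - g)) + u ^ (e + 1) * g := by
    rw [pow_succ, mul_assoc, mul_assoc, ← mul_add, ← mul_add, sub_add_cancel]
  rw [mul_assoc, ← mul_smul_comm, ← mul_pow_of_mul_eq_smul E.gen_mul_prime, ← mul_assoc, hux,
    add_mul, mul_assoc (u ^ e), ← pow_succ']

theorem gen_mul_denom_pow_mul_prime_pow (E : IsCauchonDatum act A x h fx g u fu) (e j : ℕ) :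
    x * (u ^ (e + 1) * (u * (x - g)) ^ j) =
      chi fu h ^ (e + 1) • (u ^ e * (u * (x - g)) ^ (j + 1) +
        chi fx h ^ (e + 1) • (u ^ (e + 1) * g * (u * (x - g)) ^ j)) := by
  have hux : u ^ (e + 1) * (x - g) = u ^ e * (u * (x - g)) := by rw [pow_succ, mul_assoc]
  have hxu : x * u ^ (e + 1) = chi fu h ^ (e + 1) •
      (u ^ e * (u * (x - g)) + chi fx h ^ (e + 1) • (u ^ (e + 1) * g)) := by
    calc x * u ^ (e + 1) = (x - g) * u ^ (e + 1) + g * u ^ (e + 1) := by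
          rw [_root_.sub_mul, sub_add_cancel]
      _ = _ := by
          rw [mul_pow_of_mul_eq_smul E.sub_mul_denom, mul_pow_of_mul_eq_smul E.mul_denom, hux,
            mul_pow, mul_comm (chi fx h ^ (e + 1)), mul_smul, ← smul_add]
  rw [← mul_assoc, hxu, smul_mul_assoc, add_mul, smul_mul_assoc, mul_assoc (u ^ e), ← pow_succ']

theorem prime_pow_mem_of_pow_mul_mem (E : IsCauchonDatum act A x h fx g u fu)
    (C : IsCGLStep act A B x h fx) (hI : IsHIdeal act B I) {e j : ℕ}
    (huz : u ^ e * (u * (x - g)) ^ j ∈ I) : (u * (x - g)) ^ (e + j) ∈ I := by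
  have hx := C.isOreExtension.gen_mem
  induction e generalizing j with
  | zero => simpa using huz
  | succ e ih =>
    rw [Nat.succ_add_eq_add_succ]
    refine ih ?_
    -- Multiplying by `x` on either side gives two elements `P + Q` and `P + λ ^ (e + 1) • Q` of
    -- `I`, where `P` is the goal.
    have hright := I.smul_mem ((chi fu h ^ j : Kˣ) : K) (hI.mul_mem_right x hx _ huz)
    rw [← Units.smul_def, E.denom_pow_mul_prime_pow_mul_gen] at hright
    have hleft := I.smul_mem (((chi fu h ^ (e + 1))⁻¹ : Kˣ) : K) (hI.mul_mem_left x hx _ huz)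
    rw [E.gen_mul_denom_pow_mul_prime_pow, ← Units.smul_def, inv_smul_smul, Units.smul_def]
      at hleft
    have hne : ((chi fx h ^ (e + 1) : Kˣ) : K) - 1 ≠ 0 :=
      sub_ne_zero.2 fun h1 => C.chi_pow_ne_one _ e.succ_ne_zero (Units.ext h1)
    rw [← Submodule.smul_mem_iff I hne]
    convert I.sub_mem (I.smul_mem ((chi fx h ^ (e + 1) : Kˣ) : K) hright) hleft using 1
    rw [sub_smul, one_smul, smul_add]
    abel

end IsCauchonDatum

theorem inv_list_prod_mul_pow_mem (hl : ∀ p ∈ l, IsHomogPrime act A p)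
    (hlu : ∀ p ∈ l, p⁻¹ * u ∈ A) : l.prod⁻¹ * u ^ l.length ∈ A := by
  induction l with
  | nil => simp [A.one_mem]
  | cons p l ih =>
    rw [List.forall_mem_cons] at hl hlu
    have hprod := IsNormalEigen.list_prod hl.2
    have key : (p * l.prod)⁻¹ * u ^ (l.length + 1) =
        l.prod⁻¹ * (p⁻¹ * u) * l.prod * (l.prod⁻¹ * u ^ l.length) := by
      rw [mul_inv_rev, pow_succ', mul_assoc (l.prod⁻¹ * (p⁻¹ * u)),
        mul_inv_cancel_left₀ hprod.ne_zero]
      simp only [mul_assoc]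
    rw [List.prod_cons, List.length_cons, key]
    exact A.mul_mem (hprod.inv_mul_mul_mem _ hlu.1) (ih hl.2 hlu.2)

namespace IsCauchonDatum

theorem exists_list_prod_mem_of_list_prod_mem (E : IsCauchonDatum act A x h fx g u fu)
    (C : IsCGLStep act A B x h fx) (hI : IsHIdeal act B I) (hl : ∀ p ∈ l, IsHomogPrime act A p)
    (hlI : l.prod ∈ I) : ∃ l' : List D, (∀ p ∈ l', IsHomogPrime act B p) ∧ l'.prod ∈ I := by
  have H := C.isOreExtension
  induction hn : l.length using Nat.strong_induction_on generalizing l I with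
  | _ n ih =>
  by_cases hlu : ∀ p ∈ l, p⁻¹ * u ∈ A
  · have hul : u ^ l.length ∈ I := by
      have := hI.mul_mem_right _ (H.le (inv_list_prod_mul_pow_mem hl hlu)) _ hlI
      rwa [mul_inv_cancel_left₀ (IsNormalEigen.list_prod hl).ne_zero] at this
    refine ⟨List.replicate l.length (u * (x - g)), fun p hp => ?_, ?_⟩
    · rw [List.eq_of_mem_replicate hp]
      exact E.isHomogPrime_prime C
    · rw [List.prod_replicate]
      exact E.prime_pow_mem_of_pow_mul_mem C hI (j := 0) (by simpa using hul)
  · push Not at hlu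
    obtain ⟨p, hpl, hpu⟩ := hlu
    have hp := (hl p hpl).of_skewDer_eq_zero C (E.skewDer_eq_zero C (hl p hpl) hpu)
    obtain ⟨l₁, hl₁, hlen, hprod⟩ := exists_list_prod_eq_mul_prod hl hpl
    obtain ⟨l₂, hl₂, hmem⟩ := ih _ (hn ▸ hlen)
      (hI.leftColon (fun ξ _ => C.act_mem_right ξ) hp.toIsNormalEigen) hl₁
      (mem_leftColon.2 ⟨H.le (IsNormalEigen.list_prod hl₁).mem, hprod ▸ hlI⟩) rfl
    refine ⟨p :: l₂, List.forall_mem_cons.2 ⟨hp, hl₂⟩, ?_⟩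
    rw [List.prod_cons]
    exact (mem_leftColon.1 hmem).2

theorem isHUFD (E : IsCauchonDatum act A x h fx g u fu) (C : IsCGLStep act A B x h fx)
    (hA : IsHUFD act A) : IsHUFD act B := by
  intro I hI hI0
  have H := C.isOreExtension
  have hz := E.isHomogPrime_prime C
  obtain ⟨a, ha, ha0, m, hazI⟩ := E.exists_mul_prime_pow_mem C hI hI0
  obtain ⟨a', ha', haa'⟩ := E.exists_mul_prime_pow_eq C ha m
  have hJ : IsHIdeal act B (leftColon B I ((u * (x - g)) ^ m)) :=
    hI.leftColon (fun ξ _ => C.act_mem_right ξ) (hz.toIsNormalEigen.pow m)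
  have ha'0 : a' ≠ 0 := by
    rintro rfl
    exact mul_ne_zero ha0 (pow_ne_zero m hz.ne_zero) (haa'.trans (mul_zero _))
  obtain ⟨l, hl, hlJ⟩ := hA _ (hJ.inf H.le C.act_mem) <| (Submodule.ne_bot_iff _).2
    ⟨a', ⟨ha', mem_leftColon.2 ⟨H.le ha', haa' ▸ hazI⟩⟩, ha'0⟩
  obtain ⟨l', hl', hmem⟩ := E.exists_list_prod_mem_of_list_prod_mem C hJ hl hlJ.2
  refine ⟨List.replicate m (u * (x - g)) ++ l', fun p hp => ?_, ?_⟩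
  · rcases List.mem_append.1 hp with hp | hp
    · rwa [List.eq_of_mem_replicate hp]
    · exact hl' p hp
  · rw [List.prod_append, List.prod_replicate]
    exact (mem_leftColon.1 hmem).2

end IsCauchonDatum

end CauchonStep

/-! ### Quantum nilpotent algebras -/

section Transfer

variable {K : Type u} [Field K] {R : Type v} [Ring R] [Algebra K R] {N r : ℕ}
  {D : Type v} [DivisionRing D] [Algebra K D] {ι : R →ₐ[K] D} {act : Torus K r →* (R ≃ₐ[K] R)}
  {actD : Torus K r →* (D ≃ₐ[K] D)} {A B : Subalgebra K R} {P : TwoSidedIdeal R} {p x : R}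
  {f : Fin r → ℤ}

theorem IsOreExtension.map {σ : R ≃ₐ[K] R} {τ : D ≃ₐ[K] D} (H : IsOreExtension A B x σ)
    (hι : Function.Injective ι) (hτ : ∀ a, τ (ι a) = ι (σ a)) :
    IsOreExtension (A.map ι) (B.map ι) (ι x) τ where
  le := Subalgebra.map_mono H.le
  gen_mem := ⟨x, H.gen_mem, rfl⟩
  map_mem := by
    rintro _ ⟨a, ha, rfl⟩
    exact ⟨σ a, H.map_mem a ha, (hτ a).symm⟩
  symm_mem := by
    rintro _ ⟨a, ha, rfl⟩
    refine ⟨σ.symm a, H.symm_mem a ha, τ.injective ?_⟩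
    exact (hτ _).trans ((congrArg ι (σ.apply_symm_apply a)).trans (τ.apply_symm_apply (ι a)).symm)
  skewDer_mem := by
    rintro _ ⟨a, ha, rfl⟩
    exact ⟨skewDer x σ a, H.skewDer_mem a ha, by simp [skewDer_apply, hτ]⟩
  exists_mem_polyLT := by
    rintro _ ⟨b, hb, rfl⟩
    obtain ⟨n, a, ha, rfl⟩ := H.exists_mem_polyLT b hb
    exact ⟨n, fun i => ι (a i), fun i => ⟨a i, ha i, rfl⟩, by simp⟩
  coeff_eq_zero n a ha h0 i hi := by
    choose b hb hba using ha
    obtain rfl : (fun i => ι (b i)) = a := funext hba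
    have hsum : ∑ i ∈ Finset.range n, b i * x ^ i = 0 := hι (by simpa using h0)
    simp [H.coeff_eq_zero n b hb hsum i hi]

theorem isEigenWith_map_iff (hι : Function.Injective ι)
    (hact : ∀ ξ a, actD ξ (ι a) = ι (act ξ a)) :
    IsEigenWith K actD f (ι p) ↔ IsEigenWith K act f p :=
  forall_congr' fun ξ => by rw [hact, ← map_smul, hι.eq_iff]

theorem map_skewDer_pow {σ : R ≃ₐ[K] R} {τ : D ≃ₐ[K] D} (hτ : ∀ a, τ (ι a) = ι (σ a)) (n : ℕ)
    (a : R) : (skewDer (ι x) τ ^ n) (ι a) = ι ((skewDer x σ ^ n) a) := by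
  induction n with
  | zero => rfl
  | succ n ih =>
    rw [pow_succ', pow_succ', Module.End.mul_apply, Module.End.mul_apply, ih]
    simp only [skewDer_apply, hτ, map_sub, map_mul]

theorem IsHomogPrime.isPrimeIn (hι : Function.Injective ι)
    (hp : IsHomogPrime actD (A.map ι) (ι p)) : IsPrimeIn K A p := by
  have hmem : ∀ a, ι a ∈ A.map ι ↔ a ∈ A := fun a => hι.mem_set_image
  have hdvd : ∀ a, (ι p)⁻¹ * ι a ∈ A.map ι ↔ ∃ d ∈ A, a = p * d := fun a => by
    refine exists_congr fun d => and_congr_right fun _ => ?_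
    change ι d = _ ↔ _
    rw [eq_inv_mul_iff_mul_eq₀ hp.ne_zero, ← map_mul, hι.eq_iff, eq_comm]
  refine ⟨(hmem p).1 hp.mem, ?_, ?_, fun a ha => ?_, fun a ha => ?_, fun a ha b hb hab => ?_⟩
  · rintro rfl
    exact hp.ne_zero (map_zero ι)
  · rintro ⟨u, hu, hpu, -⟩
    refine hp.inv_notMem ?_
    rw [inv_eq_of_mul_eq_one_right ((map_mul ι p u).symm.trans ((congrArg ι hpu).trans
      (map_one ι)))]
    exact (hmem u).2 hu
  · rw [← hdvd, map_mul, ← mul_assoc]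
    exact hp.inv_mul_mul_mem _ ((hmem a).2 ha)
  · obtain ⟨b, hb, hab⟩ := hp.mul_mul_inv_mem _ ((hmem a).2 ha)
    refine ⟨b, hb, hι ?_⟩
    rw [map_mul, map_mul, ← mul_inv_eq_iff_eq_mul₀ hp.ne_zero]
    exact hab.symm
  · rw [← hdvd, ← hdvd]
    rw [← hdvd, map_mul] at hab
    exact hp.mem_or_mem _ ((hmem a).2 ha) _ ((hmem b).2 hb) hab

/-- The image of a two-sided ideal under an algebra homomorphism, as a subspace. -/
def idealImage (ι : R →ₐ[K] D) (P : TwoSidedIdeal R) : Submodule K D :=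
  ((TwoSidedIdeal.asIdeal P).restrictScalars K).map ι.toLinearMap

theorem map_mem_idealImage (hι : Function.Injective ι) {a : R} : ι a ∈ idealImage ι P ↔ a ∈ P :=
  hι.mem_set_image

theorem isHIdeal_idealImage (hact : ∀ ξ a, actD ξ (ι a) = ι (act ξ a))
    (hP : TwoSidedIdeal.IsHInvariant K act P) :
    IsHIdeal actD ((⊤ : Subalgebra K R).map ι) (idealImage ι P) where
  le := Submodule.map_mono le_top
  mul_mem_left := by
    rintro _ ⟨a, -, rfl⟩ _ ⟨b, hb, rfl⟩
    exact ⟨a * b, P.mul_mem_left a b hb, map_mul ι a b⟩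
  mul_mem_right := by
    rintro _ ⟨a, -, rfl⟩ _ ⟨b, hb, rfl⟩
    exact ⟨b * a, P.mul_mem_right b a hb, map_mul ι b a⟩
  act_mem := by
    rintro ξ _ ⟨b, hb, rfl⟩
    exact ⟨act ξ b, hP ξ b hb, (hact ξ b).symm⟩

theorem idealImage_ne_bot (hι : Function.Injective ι) (hP : P ≠ ⊥) : idealImage ι P ≠ ⊥ := by
  contrapose! hP
  refine eq_bot_iff.2 fun a ha => (TwoSidedIdeal.mem_bot R).2 (hι ?_)
  rw [map_zero, ← Submodule.mem_bot K, ← hP, map_mem_idealImage hι]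
  exact ha

theorem exists_isHomogPrime_map_of_list_prod_mem (hι : Function.Injective ι) (hP : P.IsPrimeTS)
    {l : List D} (hl : ∀ q ∈ l, IsHomogPrime actD ((⊤ : Subalgebra K R).map ι) q)
    (hlP : l.prod ∈ idealImage ι P) :
    ∃ p ∈ P, IsHomogPrime actD ((⊤ : Subalgebra K R).map ι) (ι p) := by
  induction l with
  | nil =>
    rw [List.prod_nil, ← map_one ι, map_mem_idealImage hι, TwoSidedIdeal.one_mem_iff] at hlP
    exact absurd hlP hP.1
  | cons q l ih =>
    obtain ⟨hq, hl'⟩ := List.forall_mem_cons.1 hl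
    obtain ⟨p, -, (rfl : ι p = q)⟩ := hq.mem
    obtain ⟨b, -, hb⟩ := (IsNormalEigen.list_prod hl').mem
    have hpb : p * b ∈ P := by
      rw [← map_mem_idealImage hι, map_mul]
      rwa [List.prod_cons, ← hb] at hlP
    have hptb : ∀ t, p * t * b ∈ P := fun t => by
      obtain ⟨t', -, ht'⟩ := hq.mul_mul_inv_mem (ι t) ⟨t, trivial, rfl⟩
      have hpt : p * t = t' * p := hι <| by
        rw [map_mul, map_mul, ← mul_inv_eq_iff_eq_mul₀ hq.ne_zero]
        exact ht'.symm
      rw [hpt, mul_assoc]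
      exact P.mul_mem_left _ _ hpb
    rcases hP.2 p b hptb with hpP | hbP
    · exact ⟨p, hpP, hq⟩
    · exact ih hl' ⟨b, hbP, hb⟩

namespace QNA

theorem gen_ne_zero (Q : QNA K R N r) (k : Fin N) : Q.x k ≠ 0 := fun h0 => by
  have := Q.nontrivial
  refine one_ne_zero ((Q.isOreExtension k).eq_zero_of_mul_gen_pow_mem_polyLT (n := 1)
    (one_mem _) ?_)
  rw [h0, pow_one, mul_zero]
  exact Submodule.zero_mem _

theorem exists_isCGLStep (Q : QNA K R N r) (hι : Function.Injective ι)
    (hact : ∀ ξ a, actD ξ (ι a) = ι (Q.act ξ a)) (k : Fin N) :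
    ∃ fx, IsCGLStep actD ((Rsub K Q.x k).map ι) ((Rsub K Q.x (k + 1)).map ι) (ι (Q.x k))
      (Q.h k) fx := by
  obtain ⟨fx, hfx⟩ := Q.eigenvec k
  have hlam : (chi fx (Q.h k) : K) = Q.lam k :=
    smul_left_injective K (Q.gen_ne_zero k) ((hfx (Q.h k)).symm.trans (Q.hx k))
  refine ⟨fx, (Q.isOreExtension k).map hι (hact _), (isEigenWith_map_iff hι hact).2 hfx, ?_,
    fun n hn h1 => Q.lam_not_root k n hn ?_, ?_⟩
  · rintro ξ _ ⟨a, ha, rfl⟩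
    exact ⟨_, Q.act_mem_Rsub _ ξ ha, (hact ξ a).symm⟩
  · rw [← hlam, ← Units.val_pow_eq_pow_val, h1, Units.val_one]
  · rintro _ ⟨a, ha, rfl⟩
    obtain ⟨n, hn⟩ := Q.locnil k a ha
    refine ⟨n, (map_skewDer_pow (hact _) n a).trans ?_⟩
    rw [Module.End.pow_apply, ← map_zero ι, ← hn]
    rfl

theorem exists_isQuantumTorusHull_and_isHUFD (Q : QNA K R N r) (hι : Function.Injective ι)
    (hact : ∀ ξ a, actD ξ (ι a) = ι (Q.act ξ a)) {n : ℕ} (hn : n ≤ N) :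
    (∃ S, IsQuantumTorusHull actD ((Rsub K Q.x n).map ι) S) ∧
      IsHUFD actD ((Rsub K Q.x n).map ι) := by
  induction n with
  | zero =>
    rw [Q.Rsub_zero, Algebra.map_bot]
    exact ⟨⟨∅, .bot⟩, .bot⟩
  | succ n ih =>
    obtain ⟨⟨S, T⟩, hA⟩ := ih (Nat.le_of_succ_le hn)
    obtain ⟨fx, C⟩ := Q.exists_isCGLStep hι hact ⟨n, hn⟩
    have := Q.isNoetherianRing_Rsub (Nat.le_of_succ_le hn)
    have : IsNoetherianRing ((Rsub K Q.x n).map ι) :=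
      isNoetherianRing_of_ringEquiv _ ((Rsub K Q.x n).equivMapOfInjective ι hι).toRingEquiv
    obtain ⟨g, hg, hcomm, u, fu, E⟩ := T.exists_isCauchonDatum C isLeftOre_of_isNoetherianRing hA
    exact ⟨⟨_, T.insert_sub C.isOreExtension hg (C.isEigenWith_gen.sub E.isEigenWith)
      (right_ne_zero_of_mul (E.prime_ne_zero C)) hcomm⟩, E.isHUFD C hA⟩

theorem exists_isPrimeIn_isEigenWith (Q : QNA K R N r) (hP0 : P ≠ ⊥) (hP : P.IsPrimeTS)
    (hPH : TwoSidedIdeal.IsHInvariant K Q.act P) :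
    ∃ p ∈ P, IsPrimeIn K (⊤ : Subalgebra K R) p ∧
      ∃ f : Fin r → ℤ, IsEigenWith K Q.act f p := by
  have := Q.isNoetherianRing
  have := Q.isDomain
  obtain ⟨D, _, _, ι, actD, hι, hact⟩ := exists_divisionRing_action Q.act
  have hUFD := (Q.exists_isQuantumTorusHull_and_isHUFD hι hact le_rfl).2
  rw [Q.Rsub_top] at hUFD
  obtain ⟨l, hl, hlP⟩ := hUFD _ (isHIdeal_idealImage hact hPH) (idealImage_ne_bot hι hP0)
  obtain ⟨p, hpP, hp⟩ := exists_isHomogPrime_map_of_list_prod_mem hι hP hl hlP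
  obtain ⟨f, hf⟩ := hp.exists_isEigenWith
  exact ⟨p, hpP, hp.isPrimeIn hι, f, (isEigenWith_map_iff hι hact).1 hf⟩

end QNA

end Transfer

/-- **Quantum nilpotent algebras are noetherian `H`-UFDs.**
Every quantum nilpotent algebra `R` of dimension `N` over a field `K` is a noetherian
domain, and every nonzero `H`-invariant prime (two-sided) ideal of `R` contains a prime
element which is an `H`-eigenvector. -/
theorem quantum_nilpotent_algebra_is_HUFD
    {K : Type u} [Field K] {R : Type v} [Ring R] [Algebra K R] {N r : ℕ}
    (Q : QNA K R N r) :
    IsNoetherianRing R ∧ IsDomain R ∧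
    ∀ P : TwoSidedIdeal R, P ≠ ⊥ → P.IsPrimeTS →
      TwoSidedIdeal.IsHInvariant K Q.act P →
      ∃ p ∈ P, IsPrimeIn K (⊤ : Subalgebra K R) p ∧
        ∃ f : Fin r → ℤ, IsEigenWith K Q.act f p := by
  exact ⟨Q.isNoetherianRing, Q.isDomain, fun _ => Q.exists_isPrimeIn_isEigenWith⟩
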